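/- arXiv:1606.00716 — 2 statements merged into one kernel-verified Lean document; each statement's English description precedes it below -/
import Mathlib

section
/- There exists a constant $C(\delta)>0$ depending only on $\delta$ such that for every unit vector $u\in\mathbb R^d$ and all reals $x\ge1$, $K\ge1$: if $\varphi_{u,+}^{-1}(x)\ge1$ then $\varphi_{u,+}^{-1}(Kx)\le(2K^2/\delta)\,\varphi_{u,+}^{-1}(x)$, and if $\varphi_u^{-1}(x)\ge1$ then $\varphi_u^{-1}(Kx)\le(K^2/C(\delta))\,\varphi_u^{-1}(x)$ (as elements of $[0,+\infty]$). -/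
open scoped ENNReal

/-- Generalized inverse (in `ℕ∞ = ℕ ∪ {+∞}`) of `f : ℕ → ℝ` at `x ∈ ℝ`:
`sup {n | f n ≤ x}`, with `sup ∅ = 0` and `sup ℕ = +∞`. -/
noncomputable def invR (f : ℕ → ℝ) (x : ℝ) : ℕ∞ :=
  sSup ((fun m : ℕ => (m : ℕ∞)) '' {m : ℕ | f m ≤ x})

/-- Generalized inverse (in `ℕ∞`) of `f : ℕ → ℝ≥0∞` at `x ∈ ℝ≥0∞`. -/
noncomputable def invE (f : ℕ → ℝ≥0∞) (x : ℝ≥0∞) : ℕ∞ :=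
  sSup ((fun m : ℕ => (m : ℕ∞)) '' {m : ℕ | f m ≤ x})

/-- Evaluation of `f : ℕ → ℝ` at an extended natural, with value `+∞` at `+∞`. -/
noncomputable def extF (f : ℕ → ℝ) : ℕ∞ → ℝ≥0∞ :=
  fun n => if n = ⊤ then ⊤ else ENNReal.ofReal (f n.toNat)

/-!
Choose `G` with `G(l) - G(k - 1) = ∑_{k ≤ s ≤ l} (η_s · u) / ρ_s`, so that
`T_k^l(u) = ρ_{k-1} ρ_l (G(l) - G(k - 1))²`. Summed over `A < k ≤ l ≤ B` this is the weighted
variance `W S - M²` on `I = [A, B]`, where `W = ∑_I ρ`, `M = ∑_I ρ G`, `S = ∑_I ρ G²`. Its quotient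
by `W` is `min_c ∑_I ρ (G - c)²`, which increases with `I`. Ellipticity makes `W` comparable to `n`
on the windows entering `φ²(n)`, hence `φ²(n) / n` is non-decreasing up to a constant factor, and
this property is inverted to give the bound on `φ⁻¹`.
-/

section GeneralizedInverse

lemma natCast_le_invE {f : ℕ → ℝ≥0∞} {y : ℝ≥0∞} {n : ℕ} (h : f n ≤ y) : (n : ℕ∞) ≤ invE f y :=
  le_sSup ⟨n, h, rfl⟩

lemma toENNReal_invE_le_iff {f : ℕ → ℝ≥0∞} {y c : ℝ≥0∞} :
    ENat.toENNReal (invE f y) ≤ c ↔ ∀ n, f n ≤ y → (n : ℝ≥0∞) ≤ c := by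
  simp [invE, sSup_image]

lemma invR_mono (v : ℕ → ℝ) : Monotone (invR v) :=
  fun _ _ hyz => sSup_le_sSup (Set.image_mono fun _ hm => le_trans hm hyz)

lemma exists_invR_eq_natCast {v : ℕ → ℝ} {y : ℝ} (h0 : v 0 ≤ y) (h : invR v y ≠ ⊤) :
    ∃ i : ℕ, invR v y = i ∧ v i ≤ y ∧ y < v (i + 1) := by
  have hne : Nonempty ((fun m : ℕ => (m : ℕ∞)) '' {m : ℕ | v m ≤ y}) := ⟨⟨_, ⟨0, h0, rfl⟩⟩⟩
  obtain ⟨i, hi, hinv⟩ := ENat.sSup_mem_of_nonempty_of_lt_top (lt_top_iff_ne_top.mpr h)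
  refine ⟨i, hinv.symm, hi, lt_of_not_ge fun hle => ?_⟩
  have hsucc : ((i + 1 : ℕ) : ℕ∞) ≤ invR v y := le_sSup ⟨i + 1, hle, rfl⟩
  rw [invR, ← hinv] at hsucc
  exact i.lt_succ_self.not_ge (Nat.cast_le.mp hsucc)

lemma exists_invR_eq_natCast_of_le {v : ℕ → ℝ} {δ y z : ℝ} (hδ : 0 ≤ δ)
    (hv : ∀ k, δ * v (k + 1) ≤ v k) (h0 : v 0 ≤ y) (hyz : y ≤ z) (hz : invR v z ≠ ⊤) :
    ∃ i j : ℕ, invR v y = i ∧ invR v z = j ∧ i ≤ j ∧ v i ≤ y ∧ δ * z ≤ v j := by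
  have hmono := invR_mono v hyz
  obtain ⟨i, hi, hvi, -⟩ := exists_invR_eq_natCast h0 (ne_top_of_le_ne_top hz hmono)
  obtain ⟨j, hj, -, hvj⟩ := exists_invR_eq_natCast (h0.trans hyz) hz
  rw [hi, hj] at hmono
  exact ⟨i, j, hi, hj, Nat.cast_le.mp hmono, hvi,
    (mul_le_mul_of_nonneg_left hvj.le hδ).trans (hv j)⟩

lemma extF_mono {f : ℕ → ℝ} (hf : Monotone f) : Monotone (extF f) := by
  intro m n hmn
  obtain rfl | hn := eq_or_ne n ⊤
  · simp [extF]
  · rw [extF, extF, if_neg (ne_top_of_le_ne_top hn hmn), if_neg hn]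
    exact ENNReal.ofReal_le_ofReal (hf (ENat.toNat_le_toNat hmn hn))

end GeneralizedInverse

/-- `g(n) / n` is non-decreasing on `n ≥ 1` up to the factor `A`, written without division. -/
def AlmostSuperlinear (A : ℝ≥0∞) (g : ℕ → ℝ≥0∞) : Prop :=
  ∀ N n : ℕ, 1 ≤ N → N ≤ n → n * g N ≤ A * (N * g n)

section AlmostSuperlinear

lemma almostSuperlinear_natCast_mul {F : ℕ → ℝ≥0∞} (hF : Monotone F) :
    AlmostSuperlinear 1 fun n => n * F n := by
  intro N n _ hNn
  calc (n : ℝ≥0∞) * (N * F N) ≤ n * (N * F n) := by gcongr; exact hF hNn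
    _ = 1 * (N * (n * F n)) := by ring

lemma AlmostSuperlinear.add_of_ne_top {A : ℝ≥0∞} {g e : ℕ → ℝ≥0∞} (hA : 1 ≤ A)
    (hg : AlmostSuperlinear 1 g)
    (he : ∀ N n : ℕ, 1 ≤ N → N ≤ n → g n ≠ ⊤ → n * e N ≤ A * (N * e n)) :
    AlmostSuperlinear A fun n => g n + e n := by
  intro N n hN hNn
  obtain hn | hn := eq_or_ne (g n) ⊤
  · have hN0 : (N : ℝ≥0∞) ≠ 0 := Nat.cast_ne_zero.mpr (by lia)
    have hA0 : A ≠ 0 := (zero_lt_one.trans_le hA).ne'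
    simp [hn, ENNReal.mul_top hN0, ENNReal.mul_top hA0]
  · calc n * (g N + e N) = n * g N + n * e N := mul_add _ _ _
      _ ≤ A * (N * g n) + A * (N * e n) :=
        add_le_add ((hg N n hN hNn).trans (by gcongr)) (he N n hN hNn hn)
      _ = A * (N * (g n + e n)) := by ring

theorem AlmostSuperlinear.toENNReal_invE_mul_le {f : ℕ → ℝ≥0∞} {A x K : ℝ≥0∞} (hA : 1 ≤ A)
    (hf : AlmostSuperlinear A fun n => f n ^ 2) (hx0 : x ≠ 0) (hx : x ≠ ⊤) (hK : 1 ≤ K)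
    (h1 : 1 ≤ invE f x) :
    ENat.toENNReal (invE f (K * x)) ≤ 2 * K ^ 2 * A * ENat.toENNReal (invE f x) := by
  have hfactor : 1 ≤ K ^ 2 * A := one_le_mul (one_le_pow₀ hK) hA
  obtain htop | hfin := eq_or_ne (invE f x) ⊤
  · rw [htop, ENat.toENNReal_top, mul_assoc 2,
      ENNReal.mul_top (mul_ne_zero two_ne_zero (zero_lt_one.trans_le hfactor).ne')]
    exact le_top
  obtain ⟨N, hN⟩ := ENat.ne_top_iff_exists.mp hfin
  rw [← hN] at h1 ⊢
  have hN1 : 1 ≤ N := by exact_mod_cast h1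
  have hlt : x < f (N + 1) := by
    refine lt_of_not_ge fun hle => ?_
    have hsucc := natCast_le_invE hle
    rw [← hN, Nat.cast_le] at hsucc
    exact N.lt_succ_self.not_ge hsucc
  have hdouble : ((N + 1 : ℕ) : ℝ≥0∞) ≤ 2 * N := by exact_mod_cast (by lia : N + 1 ≤ 2 * N)
  rw [toENNReal_invE_le_iff, ENat.toENNReal_coe]
  intro n hn
  obtain hnN | hNn := Nat.lt_or_ge n (N + 1)
  · calc (n : ℝ≥0∞) ≤ 1 * (2 * N) := by
          rw [one_mul]; exact (Nat.cast_le.mpr hnN.le).trans hdouble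
      _ ≤ K ^ 2 * A * (2 * N) := by gcongr
      _ = 2 * K ^ 2 * A * N := by ring
  · refine (ENNReal.mul_le_mul_iff_left (pow_ne_zero 2 hx0) (ENNReal.pow_ne_top hx)).mp ?_
    calc (n : ℝ≥0∞) * x ^ 2 ≤ n * f (N + 1) ^ 2 := by gcongr
      _ ≤ A * ((N + 1 : ℕ) * f n ^ 2) := hf (N + 1) n (by lia) hNn
      _ ≤ A * (2 * N * (K * x) ^ 2) := by gcongr
      _ = 2 * K ^ 2 * A * N * x ^ 2 := by ring

end AlmostSuperlinear

/-- `W² Var(G)` for the weights `ρ` on `s`, with `W` their total mass. -/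
def weightedVariance {ι : Type*} (ρ G : ι → ℝ) (s : Finset ι) : ℝ :=
  (∑ i ∈ s, ρ i) * (∑ i ∈ s, ρ i * G i ^ 2) - (∑ i ∈ s, ρ i * G i) ^ 2

section WeightedVariance

variable {ι : Type*} (ρ G : ι → ℝ)

lemma sum_mul_sub_sq (s : Finset ι) (c : ℝ) :
    ∑ i ∈ s, ρ i * (G i - c) ^ 2 =
      ∑ i ∈ s, ρ i * G i ^ 2 - 2 * c * ∑ i ∈ s, ρ i * G i + c ^ 2 * ∑ i ∈ s, ρ i := by
  simp only [Finset.mul_sum, ← Finset.sum_add_distrib, ← Finset.sum_sub_distrib]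
  exact Finset.sum_congr rfl fun i _ => by ring

lemma sum_lt_mul_sub_sq_eq_weightedVariance [LinearOrder ι] (s : Finset ι) :
    ∑ j ∈ s, ∑ i ∈ s with i < j, ρ i * ρ j * (G j - G i) ^ 2 = weightedVariance ρ G s := by
  induction s using Finset.induction_on_max with
  | empty => simp [weightedVariance]
  | insert m s hm ih =>
    have hms : m ∉ s := fun h => (hm m h).false
    have hlast : ∑ i ∈ insert m s with i < m, ρ i * ρ m * (G m - G i) ^ 2 =
        ρ m * ∑ i ∈ s, ρ i * (G i - G m) ^ 2 := by
      rw [Finset.filter_insert, if_neg (lt_irrefl m), Finset.filter_true_of_mem hm, Finset.mul_sum]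
      exact Finset.sum_congr rfl fun i _ => by ring
    have hrest : ∀ j ∈ s, ∑ i ∈ insert m s with i < j, ρ i * ρ j * (G j - G i) ^ 2 =
        ∑ i ∈ s with i < j, ρ i * ρ j * (G j - G i) ^ 2 := fun j hj => by
      rw [Finset.filter_insert, if_neg (hm j hj).not_gt]
    rw [Finset.sum_insert hms, hlast, Finset.sum_congr rfl hrest, ih, sum_mul_sub_sq]
    simp only [weightedVariance, Finset.sum_insert hms]
    ring

variable {ρ}

lemma weightedVariance_le_sum_mul_sum_sub_sq {s : Finset ι} (c : ℝ) :
    weightedVariance ρ G s ≤ (∑ i ∈ s, ρ i) * ∑ i ∈ s, ρ i * (G i - c) ^ 2 := by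
  rw [weightedVariance, sum_mul_sub_sq]
  linarith [sq_nonneg (∑ i ∈ s, ρ i * G i - c * ∑ i ∈ s, ρ i)]

lemma sum_mul_sum_sub_mean_sq_eq_weightedVariance {s : Finset ι} (hs : ∑ i ∈ s, ρ i ≠ 0) :
    (∑ i ∈ s, ρ i) * ∑ i ∈ s, ρ i * (G i - (∑ i ∈ s, ρ i * G i) / ∑ i ∈ s, ρ i) ^ 2 =
      weightedVariance ρ G s := by
  rw [weightedVariance, sum_mul_sub_sq]
  field_simp
  ring

theorem weightedVariance_mul_sum_le {s t : Finset ι} (hst : s ⊆ t) (hρ : ∀ i ∈ t, 0 ≤ ρ i) :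
    weightedVariance ρ G s * ∑ i ∈ t, ρ i ≤ weightedVariance ρ G t * ∑ i ∈ s, ρ i := by
  have hmass_s : 0 ≤ ∑ i ∈ s, ρ i := Finset.sum_nonneg fun i hi => hρ i (hst hi)
  have hmass_t : 0 ≤ ∑ i ∈ t, ρ i := Finset.sum_nonneg hρ
  have hmass_le : ∑ i ∈ s, ρ i ≤ ∑ i ∈ t, ρ i :=
    Finset.sum_le_sum_of_subset_of_nonneg hst fun i hi _ => hρ i hi
  obtain ht | ht := eq_or_ne (∑ i ∈ t, ρ i) 0
  · rw [ht, le_antisymm (hmass_le.trans_eq ht) hmass_s, mul_zero, mul_zero]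
  set c := (∑ i ∈ t, ρ i * G i) / ∑ i ∈ t, ρ i
  have hmono : ∑ i ∈ s, ρ i * (G i - c) ^ 2 ≤ ∑ i ∈ t, ρ i * (G i - c) ^ 2 :=
    Finset.sum_le_sum_of_subset_of_nonneg hst fun i hi _ => mul_nonneg (hρ i hi) (sq_nonneg _)
  calc weightedVariance ρ G s * ∑ i ∈ t, ρ i
      ≤ (∑ i ∈ s, ρ i) * (∑ i ∈ s, ρ i * (G i - c) ^ 2) * ∑ i ∈ t, ρ i := by
        gcongr; exact weightedVariance_le_sum_mul_sum_sub_sq G c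
    _ ≤ (∑ i ∈ s, ρ i) * (∑ i ∈ t, ρ i * (G i - c) ^ 2) * ∑ i ∈ t, ρ i := by gcongr
    _ = (∑ i ∈ t, ρ i) * (∑ i ∈ t, ρ i * (G i - c) ^ 2) * ∑ i ∈ s, ρ i := by ring
    _ = weightedVariance ρ G t * ∑ i ∈ s, ρ i := by
        rw [sum_mul_sum_sub_mean_sq_eq_weightedVariance G ht]

end WeightedVariance

/-- The paper's `T_k^l(u)`, with an arbitrary real sequence `θ` in place of `η · u`. -/
noncomputable def fluctuation (ρ θ : ℤ → ℝ) (k l : ℤ) : ℝ :=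
  (∑ s ∈ Finset.Icc k l, θ s * (ρ l / ρ s)) ^ 2 * (ρ (k - 1) / ρ l)

/-- The pairs `(k, l)` with `A < k ≤ l ≤ B`. The left end is excluded because `T_k^l` involves the
sites `k - 1, …, l`, which then range over `[A, B]`. -/
noncomputable def pairsIoc (A B : ℤ) : Finset (ℤ × ℤ) :=
  {z ∈ Finset.Ioc A B ×ˢ Finset.Ioc A B | z.1 ≤ z.2}

/-- The sum of `T_k^l` over `A < k ≤ l ≤ B`. -/
noncomputable def fluctuationSum (ρ θ : ℤ → ℝ) (A B : ℤ) : ℝ :=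
  ∑ z ∈ pairsIoc A B, fluctuation ρ θ z.1 z.2

section Fluctuation

variable {ρ θ : ℤ → ℝ}

lemma mem_pairsIoc {A B : ℤ} {z : ℤ × ℤ} :
    z ∈ pairsIoc A B ↔ A < z.1 ∧ z.1 ≤ z.2 ∧ z.2 ≤ B := by
  simp only [pairsIoc, Finset.mem_filter, Finset.mem_product, Finset.mem_Ioc]
  lia

lemma fluctuation_nonneg (hρ : ∀ n, 0 < ρ n) (k l : ℤ) : 0 ≤ fluctuation ρ θ k l :=
  mul_nonneg (sq_nonneg _) (div_nonneg (hρ _).le (hρ _).le)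

lemma fluctuationSum_nonneg (hρ : ∀ n, 0 < ρ n) (A B : ℤ) : 0 ≤ fluctuationSum ρ θ A B :=
  Finset.sum_nonneg fun _ _ => fluctuation_nonneg hρ _ _

lemma sum_Ioc_sub_sum_Ioc {A i l : ℤ} (hAi : A ≤ i) (hil : i ≤ l) (f : ℤ → ℝ) :
    ∑ s ∈ Finset.Ioc A l, f s - ∑ s ∈ Finset.Ioc A i, f s = ∑ s ∈ Finset.Ioc i l, f s := by
  rw [← Finset.Ioc_union_Ioc_eq_Ioc hAi hil,
    Finset.sum_union (Finset.Ioc_disjoint_Ioc_of_le le_rfl), add_sub_cancel_left]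

lemma fluctuation_add_one (hρ : ∀ n, 0 < ρ n) (i l : ℤ) :
    fluctuation ρ θ (i + 1) l = ρ i * ρ l * (∑ s ∈ Finset.Ioc i l, θ s / ρ s) ^ 2 := by
  have hsum : ∑ s ∈ Finset.Icc (i + 1) l, θ s * (ρ l / ρ s) =
      ρ l * ∑ s ∈ Finset.Ioc i l, θ s / ρ s := by
    rw [← Finset.Icc_add_one_left_eq_Ioc, Finset.mul_sum]
    exact Finset.sum_congr rfl fun s _ => by ring
  have hl := (hρ l).ne'
  rw [fluctuation, hsum, add_sub_cancel_right]
  field_simp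

lemma fluctuationSum_eq_sum_sum (A B : ℤ) :
    fluctuationSum ρ θ A B =
      ∑ l ∈ Finset.Icc A B, ∑ i ∈ Finset.Icc A B with i < l, fluctuation ρ θ (i + 1) l := by
  rw [Finset.sum_sigma', fluctuationSum]
  refine Finset.sum_bij' (fun z _ => ⟨z.2, z.1 - 1⟩) (fun z _ => (z.2 + 1, z.1)) ?_ ?_ ?_ ?_ ?_
  all_goals
    simp only [mem_pairsIoc, Finset.mem_sigma, Finset.mem_filter, Finset.mem_Icc, sub_add_cancel,
      add_sub_cancel_right, implies_true, Prod.mk.eta, Sigma.eta]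
    try lia

lemma fluctuationSum_eq_weightedVariance (hρ : ∀ n, 0 < ρ n) {A₀ A B : ℤ} (hA : A₀ ≤ A) :
    fluctuationSum ρ θ A B =
      weightedVariance ρ (fun j => ∑ s ∈ Finset.Ioc A₀ j, θ s / ρ s) (Finset.Icc A B) := by
  rw [fluctuationSum_eq_sum_sum, ← sum_lt_mul_sub_sq_eq_weightedVariance]
  refine Finset.sum_congr rfl fun l _ => Finset.sum_congr rfl fun i hi => ?_
  obtain ⟨hi, hil⟩ := Finset.mem_filter.mp hi
  rw [fluctuation_add_one hρ,
    sum_Ioc_sub_sum_Ioc (hA.trans (Finset.mem_Icc.mp hi).1) hil.le]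

theorem fluctuationSum_mul_sum_le (hρ : ∀ n, 0 < ρ n) {A A' B B' : ℤ} (hA : A' ≤ A) (hB : B ≤ B') :
    fluctuationSum ρ θ A B * ∑ k ∈ Finset.Icc A' B', ρ k ≤
      fluctuationSum ρ θ A' B' * ∑ k ∈ Finset.Icc A B, ρ k := by
  rw [fluctuationSum_eq_weightedVariance hρ hA, fluctuationSum_eq_weightedVariance hρ le_rfl]
  exact weightedVariance_mul_sum_le _ (Finset.Icc_subset_Icc hA hB) fun k _ => (hρ k).le

lemma natCast_mul_ofReal_fluctuationSum_le (hρ : ∀ n, 0 < ρ n) {A A' B B' : ℤ} (hA : A' ≤ A)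
    (hB : B ≤ B') {b c : ℝ} (hb : 0 ≤ b) (hc : 0 < c) {N n : ℕ}
    (hN : ∑ k ∈ Finset.Icc A B, ρ k ≤ b * N) (hn : c * n ≤ ∑ k ∈ Finset.Icc A' B', ρ k) :
    n * ENNReal.ofReal (fluctuationSum ρ θ A B) ≤
      ENNReal.ofReal (b / c) * (N * ENNReal.ofReal (fluctuationSum ρ θ A' B')) := by
  have hsmall := fluctuationSum_nonneg (θ := θ) hρ A B
  have hlarge := fluctuationSum_nonneg (θ := θ) hρ A' B'
  have hcross : c * (n * fluctuationSum ρ θ A B) ≤ b * (N * fluctuationSum ρ θ A' B') :=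
    calc c * (n * fluctuationSum ρ θ A B) = fluctuationSum ρ θ A B * (c * n) := by ring
      _ ≤ fluctuationSum ρ θ A B * ∑ k ∈ Finset.Icc A' B', ρ k := by gcongr
      _ ≤ fluctuationSum ρ θ A' B' * ∑ k ∈ Finset.Icc A B, ρ k :=
        fluctuationSum_mul_sum_le hρ hA hB
      _ ≤ fluctuationSum ρ θ A' B' * (b * N) := by gcongr
      _ = b * (N * fluctuationSum ρ θ A' B') := by ring
  simp only [← ENNReal.ofReal_natCast]
  rw [← ENNReal.ofReal_mul n.cast_nonneg, ← ENNReal.ofReal_mul N.cast_nonneg,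
    ← ENNReal.ofReal_mul (div_nonneg hb hc.le)]
  refine ENNReal.ofReal_le_ofReal ?_
  rwa [div_mul_eq_mul_div, le_div_iff₀' hc]

lemma tsum_fluctuation_eq_ofReal (hρ : ∀ n, 0 < ρ n) (F : Finset (ℤ × ℤ)) {S : Set (ℤ × ℤ)}
    (hS : ∀ z, z ∈ S ↔ z ∈ F) :
    ∑' z : S, ENNReal.ofReal (fluctuation ρ θ z.1.1 z.1.2) =
      ENNReal.ofReal (∑ z ∈ F, fluctuation ρ θ z.1 z.2) := by
  obtain rfl : S = F := Set.ext hS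
  rw [ENNReal.ofReal_sum_of_nonneg fun _ _ => fluctuation_nonneg hρ _ _]
  exact F.tsum_subtype' fun z => ENNReal.ofReal (fluctuation ρ θ z.1 z.2)

end Fluctuation

/-- The paper's `v₊`. -/
noncomputable def vPlus (ρ : ℤ → ℝ) (n : ℕ) : ℝ := ∑ k ∈ Finset.Icc (0 : ℤ) n, ρ k

/-- The paper's `v₋`, with `a₀` written as `1 / ρ₋₁`. -/
noncomputable def vMinus (ρ : ℤ → ℝ) (n : ℕ) : ℝ :=
  (ρ (-1))⁻¹ * ∑ k ∈ Finset.Icc (-(n : ℤ) - 1) (-1), ρ k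

/-- The paper's `w₊`. -/
noncomputable def wPlus (ρ : ℤ → ℝ) (n : ℕ) : ℝ := ∑ k ∈ Finset.Icc (0 : ℤ) n, 1 / ρ k

/-- The paper's `w₋`, with `1 / a₀` written as `ρ₋₁`. -/
noncomputable def wMinus (ρ : ℤ → ℝ) (n : ℕ) : ℝ :=
  ρ (-1) * ∑ k ∈ Finset.Icc (-(n : ℤ) - 1) (-1), 1 / ρ k

/-- The paper's `ψ²`. -/
noncomputable def psiSq (ρ : ℤ → ℝ) (n : ℕ) : ℝ≥0∞ :=
  n * (extF (wPlus ρ) (invR (vPlus ρ) n) + extF (wMinus ρ) (invR (vMinus ρ) n))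

/-- The pairs `(k, l)` with `-v₋⁻¹(n) ≤ k ≤ l ≤ v₊⁻¹(n)`, over which `φ²(n)` sums `T_k^l`. -/
def window (ρ : ℤ → ℝ) (n : ℕ) : Set (ℤ × ℤ) :=
  {z | z.1 ≤ z.2 ∧ ((-z.1).toNat : ℕ∞) ≤ invR (vMinus ρ) n ∧
    (z.2.toNat : ℕ∞) ≤ invR (vPlus ρ) n}

/-- The pairs of `window ρ n` with `k l > 0`, over which `φ₊²(n)` sums `T_k^l`. -/
def windowPlus (ρ : ℤ → ℝ) (n : ℕ) : Set (ℤ × ℤ) :=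
  {z | z.1 ≤ z.2 ∧ ((-z.1).toNat : ℕ∞) ≤ invR (vMinus ρ) n ∧
    (z.2.toNat : ℕ∞) ≤ invR (vPlus ρ) n ∧ 0 < z.1 * z.2}

/-- The paper's `φ²`, with an arbitrary real sequence `θ` in place of `η · u`. -/
noncomputable def phiSq (ρ θ : ℤ → ℝ) (n : ℕ) : ℝ≥0∞ :=
  psiSq ρ n + ∑' z : window ρ n, ENNReal.ofReal (fluctuation ρ θ z.1.1 z.1.2)

/-- The paper's `φ₊²`, with an arbitrary real sequence `θ` in place of `η · u`. -/
noncomputable def phiPlusSq (ρ θ : ℤ → ℝ) (n : ℕ) : ℝ≥0∞ :=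
  psiSq ρ n + ∑' z : windowPlus ρ n, ENNReal.ofReal (fluctuation ρ θ z.1.1 z.1.2)

section Window

variable {ρ θ : ℤ → ℝ} {n i j : ℕ}

lemma tsum_window (hρ : ∀ n, 0 < ρ n) (hi : invR (vPlus ρ) n = i) (hj : invR (vMinus ρ) n = j) :
    ∑' z : window ρ n, ENNReal.ofReal (fluctuation ρ θ z.1.1 z.1.2) =
      ENNReal.ofReal (fluctuationSum ρ θ (-(j : ℤ) - 1) i) := by
  refine tsum_fluctuation_eq_ofReal hρ _ fun z => ?_
  rw [mem_pairsIoc, window, Set.mem_ofPred_eq, hi, hj, Nat.cast_le, Nat.cast_le]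
  lia

lemma tsum_windowPlus (hρ : ∀ n, 0 < ρ n) (hi : invR (vPlus ρ) n = i)
    (hj : invR (vMinus ρ) n = j) :
    ∑' z : windowPlus ρ n, ENNReal.ofReal (fluctuation ρ θ z.1.1 z.1.2) =
      ENNReal.ofReal (fluctuationSum ρ θ 0 i) +
        ENNReal.ofReal (fluctuationSum ρ θ (-(j : ℤ) - 1) (-1)) := by
  have hdisj : Disjoint (pairsIoc 0 i) (pairsIoc (-(j : ℤ) - 1) (-1)) := by
    refine Finset.disjoint_left.mpr fun z => ?_
    rw [mem_pairsIoc, mem_pairsIoc]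
    lia
  rw [← ENNReal.ofReal_add (fluctuationSum_nonneg hρ _ _) (fluctuationSum_nonneg hρ _ _),
    fluctuationSum, fluctuationSum, ← Finset.sum_union hdisj]
  refine tsum_fluctuation_eq_ofReal hρ _ fun z => ?_
  rw [Finset.mem_union, mem_pairsIoc, mem_pairsIoc, windowPlus, Set.mem_ofPred_eq, hi, hj,
    Nat.cast_le, Nat.cast_le, mul_pos_iff]
  lia

lemma invR_ne_top_of_psiSq_ne_top (hn : 1 ≤ n) (h : psiSq ρ n ≠ ⊤) :
    invR (vPlus ρ) n ≠ ⊤ ∧ invR (vMinus ρ) n ≠ ⊤ := by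
  have hn0 : (n : ℝ≥0∞) ≠ 0 := Nat.cast_ne_zero.mpr (by lia)
  constructor <;> intro htop <;> simp [psiSq, extF, htop, ENNReal.mul_top hn0] at h

lemma wPlus_mono (hρ : ∀ n, 0 < ρ n) : Monotone (wPlus ρ) := fun _ _ hij =>
  Finset.sum_le_sum_of_subset_of_nonneg (Finset.Icc_subset_Icc le_rfl (by lia))
    fun k _ _ => (one_div_pos.mpr (hρ k)).le

lemma wMinus_mono (hρ : ∀ n, 0 < ρ n) : Monotone (wMinus ρ) := fun _ _ hij =>
  mul_le_mul_of_nonneg_left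
    (Finset.sum_le_sum_of_subset_of_nonneg (Finset.Icc_subset_Icc (by lia) le_rfl)
      fun k _ _ => (one_div_pos.mpr (hρ k)).le) (hρ _).le

lemma almostSuperlinear_psiSq (hρ : ∀ n, 0 < ρ n) : AlmostSuperlinear 1 (psiSq ρ) :=
  almostSuperlinear_natCast_mul fun _ _ hij => add_le_add
    (extF_mono (wPlus_mono hρ) (invR_mono _ (Nat.cast_le.mpr hij)))
    (extF_mono (wMinus_mono hρ) (invR_mono _ (Nat.cast_le.mpr hij)))

lemma sum_Icc_eq_vMinus (hρ : ∀ n, 0 < ρ n) (j : ℕ) :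
    ∑ k ∈ Finset.Icc (-(j : ℤ) - 1) (-1), ρ k = ρ (-1) * vMinus ρ j := by
  rw [vMinus, mul_inv_cancel_left₀ (hρ _).ne']

lemma sum_Icc_eq_vMinus_add_vPlus (hρ : ∀ n, 0 < ρ n) (i j : ℕ) :
    ∑ k ∈ Finset.Icc (-(j : ℤ) - 1) i, ρ k = ρ (-1) * vMinus ρ j + vPlus ρ i := by
  have hdisj : Disjoint (Finset.Icc (-(j : ℤ) - 1) (-1)) (Finset.Icc 0 (i : ℤ)) := by
    refine Finset.disjoint_left.mpr fun k => ?_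
    simp only [Finset.mem_Icc]
    lia
  rw [← sum_Icc_eq_vMinus hρ, vPlus, ← Finset.sum_union hdisj]
  congr 1
  ext k
  simp only [Finset.mem_Icc, Finset.mem_union]
  lia

end Window

/-- The potentials `ρ` of a `δ`-elliptic environment: `ρ₀ = 1` and each of two neighbouring values
is at least the fraction `δ` of their sum. For `ρ (n + 1) / ρ n = q / p` this says that `p` and `q`
are at least `δ (p + q)`. -/
structure IsEllipticPotential (δ : ℝ) (ρ : ℤ → ℝ) : Prop where
  zero : ρ 0 = 1
  pos : ∀ n, 0 < ρ n
  mul_add_le_left : ∀ n, δ * (ρ n + ρ (n + 1)) ≤ ρ n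
  mul_add_le_right : ∀ n, δ * (ρ n + ρ (n + 1)) ≤ ρ (n + 1)

lemma isEllipticPotential_of_balance {δ : ℝ} {p q ρ : ℤ → ℝ} (hδ : 0 < δ) (hp : ∀ n, δ ≤ p n)
    (hq : ∀ n, δ ≤ q n) (hpq : ∀ n, p n + q n ≤ 1) (hρ0 : ρ 0 = 1)
    (hbal : ∀ n, p (n + 1) * ρ (n + 1) = q (n + 1) * ρ n) : IsEllipticPotential δ ρ := by
  have hp0 n : 0 < p n := hδ.trans_le (hp n)
  have hq0 n : 0 < q n := hδ.trans_le (hq n)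
  have hstep n : 0 < ρ n ↔ 0 < ρ (n + 1) := by
    rw [← mul_pos_iff_of_pos_left (hq0 (n + 1)), ← hbal, mul_pos_iff_of_pos_left (hp0 (n + 1))]
  have hpos n : 0 < ρ n := by
    induction n with
    | zero => rw [hρ0]; exact one_pos
    | succ i ih => exact (hstep i).mp ih
    | pred i ih => exact (hstep _).mpr (by rwa [sub_add_cancel])
  have hsum n : 0 ≤ ρ n + ρ (n + 1) := (add_pos (hpos n) (hpos (n + 1))).le
  refine ⟨hρ0, hpos, fun n => ?_, fun n => ?_⟩
  · calc δ * (ρ n + ρ (n + 1)) ≤ p (n + 1) * (ρ n + ρ (n + 1)) :=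
          mul_le_mul_of_nonneg_right (hp _) (hsum n)
      _ = (p (n + 1) + q (n + 1)) * ρ n := by rw [mul_add, hbal, add_mul]
      _ ≤ ρ n := mul_le_of_le_one_left (hpos n).le (hpq _)
  · calc δ * (ρ n + ρ (n + 1)) ≤ q (n + 1) * (ρ n + ρ (n + 1)) :=
          mul_le_mul_of_nonneg_right (hq _) (hsum n)
      _ = (p (n + 1) + q (n + 1)) * ρ (n + 1) := by rw [mul_add, ← hbal, add_mul]
      _ ≤ ρ (n + 1) := mul_le_of_le_one_left (hpos _).le (hpq _)

lemma isEllipticPotential_of_recursion {δ : ℝ} {p q a ρ : ℤ → ℝ} (hδ : 0 < δ) (hp : ∀ n, δ ≤ p n)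
    (hq : ∀ n, δ ≤ q n) (hpq : ∀ n, p n + q n ≤ 1) (ha : ∀ n, a n = q n / p n) (hρ0 : ρ 0 = 1)
    (hρp : ∀ n, 1 ≤ n → ρ n = ρ (n - 1) * a n) (hρm : ∀ n ≤ -1, ρ n = ρ (n + 1) / a (n + 1)) :
    IsEllipticPotential δ ρ := by
  refine isEllipticPotential_of_balance hδ hp hq hpq hρ0 fun n => ?_
  have hp0 : p (n + 1) ≠ 0 := (hδ.trans_le (hp _)).ne'
  have hq0 : q (n + 1) ≠ 0 := (hδ.trans_le (hq _)).ne'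
  obtain hn | hn := le_or_gt 0 n
  · rw [hρp (n + 1) (by lia), add_sub_cancel_right, ha]
    field_simp
  · rw [hρm n (by lia), ha]
    field_simp

lemma mul_sum_insert_le {ι : Type*} [DecidableEq ι] {ρ : ι → ℝ} {δ : ℝ} {s : Finset ι} {i j : ι}
    (hδ : δ ≤ 1) (hρ : ∀ k ∈ s, 0 ≤ ρ k) (hi : i ∈ s) (hj : j ∉ s) (hij : δ * (ρ i + ρ j) ≤ ρ i) :
    δ * ∑ k ∈ insert j s, ρ k ≤ ∑ k ∈ s, ρ k := by
  have hrest : 0 ≤ ∑ k ∈ s.erase i, ρ k :=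
    Finset.sum_nonneg fun k hk => hρ k (Finset.mem_of_mem_erase hk)
  rw [Finset.sum_insert hj, ← Finset.add_sum_erase s ρ hi]
  calc δ * (ρ j + (ρ i + ∑ k ∈ s.erase i, ρ k))
      = δ * (ρ i + ρ j) + δ * ∑ k ∈ s.erase i, ρ k := by ring
    _ ≤ ρ i + ∑ k ∈ s.erase i, ρ k := add_le_add hij (mul_le_of_le_one_left hrest hδ)

namespace IsEllipticPotential

variable {δ : ℝ} {ρ : ℤ → ℝ}

lemma le_one (hρ : IsEllipticPotential δ ρ) : δ ≤ 1 := by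
  refine le_of_mul_le_mul_right ?_ (add_pos (hρ.pos 0) (hρ.pos (0 + 1)))
  rw [one_mul]
  exact (hρ.mul_add_le_left 0).trans (le_add_of_nonneg_right (hρ.pos _).le)

lemma one_le_one_div (hρ : IsEllipticPotential δ ρ) (hδ : 0 < δ) : 1 ≤ 1 / δ :=
  (one_le_div₀ hδ).mpr hρ.le_one

lemma one_le_one_div_sq (hρ : IsEllipticPotential δ ρ) (hδ : 0 < δ) : 1 ≤ 1 / δ ^ 2 :=
  (one_le_div₀ (pow_pos hδ 2)).mpr (pow_le_one₀ hδ.le hρ.le_one)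

lemma vPlus_zero (hρ : IsEllipticPotential δ ρ) : vPlus ρ 0 = 1 := by
  simp [vPlus, hρ.zero]

lemma vMinus_zero (hρ : IsEllipticPotential δ ρ) : vMinus ρ 0 = 1 := by
  simp [vMinus, (hρ.pos (-1)).ne']

lemma vMinus_nonneg (hρ : IsEllipticPotential δ ρ) (n : ℕ) : 0 ≤ vMinus ρ n :=
  mul_nonneg (inv_nonneg.mpr (hρ.pos _).le) (Finset.sum_nonneg fun k _ => (hρ.pos k).le)

lemma mul_vPlus_succ_le (hρ : IsEllipticPotential δ ρ) (n : ℕ) :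
    δ * vPlus ρ (n + 1) ≤ vPlus ρ n := by
  have hIcc : Finset.Icc (0 : ℤ) (n + 1 : ℕ) = insert (n + 1 : ℤ) (Finset.Icc 0 (n : ℤ)) := by
    ext k
    simp only [Finset.mem_Icc, Finset.mem_insert]
    lia
  rw [vPlus, vPlus, hIcc]
  exact mul_sum_insert_le hρ.le_one (fun k _ => (hρ.pos k).le) (by simp) (by simp)
    (hρ.mul_add_le_left n)

lemma mul_vMinus_succ_le (hρ : IsEllipticPotential δ ρ) (n : ℕ) :
    δ * vMinus ρ (n + 1) ≤ vMinus ρ n := by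
  have hIcc : Finset.Icc (-((n + 1 : ℕ) : ℤ) - 1) (-1) =
      insert (-(n : ℤ) - 2) (Finset.Icc (-(n : ℤ) - 1) (-1)) := by
    ext k
    simp only [Finset.mem_Icc, Finset.mem_insert]
    lia
  have hstep : δ * (ρ (-(n : ℤ) - 1) + ρ (-(n : ℤ) - 2)) ≤ ρ (-(n : ℤ) - 1) := by
    have h := hρ.mul_add_le_right (-(n : ℤ) - 2)
    rwa [show -(n : ℤ) - 2 + 1 = -(n : ℤ) - 1 by ring, add_comm] at h
  rw [vMinus, vMinus, mul_left_comm, hIcc]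
  refine mul_le_mul_of_nonneg_left ?_ (inv_nonneg.mpr (hρ.pos _).le)
  exact mul_sum_insert_le hρ.le_one (fun k _ => (hρ.pos k).le) (by simp)
    (by rw [Finset.mem_Icc]; lia) hstep

lemma exists_invR_eq_natCast (hρ : IsEllipticPotential δ ρ) (hδ : 0 ≤ δ) {N n : ℕ} (hN : 1 ≤ N)
    (hNn : N ≤ n) (h : psiSq ρ n ≠ ⊤) :
    (∃ i i' : ℕ, invR (vPlus ρ) N = i ∧ invR (vPlus ρ) n = i' ∧ i ≤ i' ∧
      vPlus ρ i ≤ N ∧ δ * n ≤ vPlus ρ i') ∧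
    ∃ j j' : ℕ, invR (vMinus ρ) N = j ∧ invR (vMinus ρ) n = j' ∧ j ≤ j' ∧
      vMinus ρ j ≤ N ∧ δ * n ≤ vMinus ρ j' := by
  obtain ⟨hplus, hminus⟩ := invR_ne_top_of_psiSq_ne_top (hN.trans hNn) h
  have hN' : (1 : ℝ) ≤ N := Nat.one_le_cast.mpr hN
  have hNn' : (N : ℝ) ≤ n := Nat.cast_le.mpr hNn
  constructor
  · exact exists_invR_eq_natCast_of_le hδ hρ.mul_vPlus_succ_le (hρ.vPlus_zero.trans_le hN') hNn'
      hplus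
  · exact exists_invR_eq_natCast_of_le hδ hρ.mul_vMinus_succ_le (hρ.vMinus_zero.trans_le hN') hNn'
      hminus

theorem almostSuperlinear_phiPlusSq (hρ : IsEllipticPotential δ ρ) (hδ : 0 < δ) (θ : ℤ → ℝ) :
    AlmostSuperlinear (ENNReal.ofReal (1 / δ)) (phiPlusSq ρ θ) := by
  refine (almostSuperlinear_psiSq hρ.pos).add_of_ne_top
    (ENNReal.one_le_ofReal.mpr (hρ.one_le_one_div hδ)) ?_
  intro N n hN hNn hψ
  obtain ⟨⟨i, i', hi, hi', hii', hvi, hvi'⟩, j, j', hj, hj', hjj', hvj, hvj'⟩ :=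
    hρ.exists_invR_eq_natCast hδ.le hN hNn hψ
  have hρ1 := hρ.pos (-1)
  have hplus := natCast_mul_ofReal_fluctuationSum_le (θ := θ) hρ.pos (le_refl 0)
    (by lia : (i : ℤ) ≤ i') zero_le_one hδ
    (hvi.trans_eq (one_mul _).symm) hvi'
  have hminus := natCast_mul_ofReal_fluctuationSum_le (θ := θ) hρ.pos (b := ρ (-1))
    (by lia : -(j' : ℤ) - 1 ≤ -j - 1) (le_refl (-1)) hρ1.le (mul_pos hρ1 hδ)
    (by rw [sum_Icc_eq_vMinus hρ.pos]; gcongr)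
    (by rw [sum_Icc_eq_vMinus hρ.pos, mul_assoc]; gcongr)
  rw [div_mul_cancel_left₀ hρ1.ne', ← one_div] at hminus
  rw [tsum_windowPlus hρ.pos hi hj, tsum_windowPlus hρ.pos hi' hj', mul_add, mul_add, mul_add]
  exact add_le_add hplus hminus

theorem almostSuperlinear_phiSq (hρ : IsEllipticPotential δ ρ) (hδ : 0 < δ) (θ : ℤ → ℝ) :
    AlmostSuperlinear (ENNReal.ofReal (1 / δ ^ 2)) (phiSq ρ θ) := by
  refine (almostSuperlinear_psiSq hρ.pos).add_of_ne_top
    (ENNReal.one_le_ofReal.mpr (hρ.one_le_one_div_sq hδ)) ?_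
  intro N n hN hNn hψ
  obtain ⟨⟨i, i', hi, hi', hii', hvi, hvi'⟩, j, j', hj, hj', hjj', hvj, -⟩ :=
    hρ.exists_invR_eq_natCast hδ.le hN hNn hψ
  have hmass : ρ (-1) + 1 ≤ 1 / δ := by
    have h := hρ.mul_add_le_right (-1)
    rwa [neg_add_cancel, hρ.zero, ← le_div_iff₀' hδ] at h
  have hmass_N : ∑ k ∈ Finset.Icc (-(j : ℤ) - 1) i, ρ k ≤ 1 / δ * N :=
    calc ∑ k ∈ Finset.Icc (-(j : ℤ) - 1) i, ρ k = ρ (-1) * vMinus ρ j + vPlus ρ i :=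
          sum_Icc_eq_vMinus_add_vPlus hρ.pos i j
      _ ≤ ρ (-1) * N + N := add_le_add (mul_le_mul_of_nonneg_left hvj (hρ.pos _).le) hvi
      _ = (ρ (-1) + 1) * N := by ring
      _ ≤ 1 / δ * N := by gcongr
  have hmass_n : δ * n ≤ ∑ k ∈ Finset.Icc (-(j' : ℤ) - 1) i', ρ k := by
    rw [sum_Icc_eq_vMinus_add_vPlus hρ.pos]
    exact hvi'.trans (le_add_of_nonneg_left (mul_nonneg (hρ.pos _).le (hρ.vMinus_nonneg j')))
  rw [tsum_window hρ.pos hi hj, tsum_window hρ.pos hi' hj', sq, ← div_div]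
  exact natCast_mul_ofReal_fluctuationSum_le hρ.pos (by lia) (by lia) (one_div_pos.mpr hδ).le hδ
    hmass_N hmass_n

end IsEllipticPotential

lemma toENNReal_invE_ofReal_mul_le {f : ℕ → ℝ≥0∞} {A x K : ℝ} (hA : 1 ≤ A)
    (hf : AlmostSuperlinear (ENNReal.ofReal A) fun n => f n ^ 2) (hx : 0 < x) (hK : 1 ≤ K)
    (h1 : 1 ≤ invE f (ENNReal.ofReal x)) :
    ENat.toENNReal (invE f (ENNReal.ofReal (K * x))) ≤
      ENNReal.ofReal (2 * K ^ 2 * A) * ENat.toENNReal (invE f (ENNReal.ofReal x)) := by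
  have h := hf.toENNReal_invE_mul_le (ENNReal.one_le_ofReal.mpr hA) (ENNReal.ofReal_pos.mpr hx).ne'
    ENNReal.ofReal_ne_top (ENNReal.one_le_ofReal.mpr hK) h1
  have hK0 : 0 ≤ K := zero_le_one.trans hK
  rwa [← ENNReal.ofReal_mul hK0, ← ENNReal.ofReal_pow hK0, ← ENNReal.ofReal_ofNat 2,
    ← ENNReal.ofReal_mul zero_le_two, ← ENNReal.ofReal_mul (by positivity)] at h

theorem stmt_8_general {δ : ℝ} (hδ : 0 < δ) {ρ : ℤ → ℝ} (hρ : IsEllipticPotential δ ρ)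
    (θ : ℤ → ℝ) {φ φp : ℕ → ℝ≥0∞} (hφ : ∀ n, φ n ^ 2 = phiSq ρ θ n)
    (hφp : ∀ n, φp n ^ 2 = phiPlusSq ρ θ n) {x K : ℝ} (hx : 0 < x) (hK : 1 ≤ K) :
    (1 ≤ invE φp (ENNReal.ofReal x) →
      ENat.toENNReal (invE φp (ENNReal.ofReal (K * x))) ≤
        ENNReal.ofReal (2 * K ^ 2 / δ) * ENat.toENNReal (invE φp (ENNReal.ofReal x))) ∧
    (1 ≤ invE φ (ENNReal.ofReal x) →
      ENat.toENNReal (invE φ (ENNReal.ofReal (K * x))) ≤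
        ENNReal.ofReal (2 * K ^ 2 / δ ^ 2) * ENat.toENNReal (invE φ (ENNReal.ofReal x))) := by
  have hφp' := (funext hφp).symm ▸ hρ.almostSuperlinear_phiPlusSq hδ θ
  have hφ' := (funext hφ).symm ▸ hρ.almostSuperlinear_phiSq hδ θ
  rw [div_eq_mul_one_div _ δ, div_eq_mul_one_div _ (δ ^ 2)]
  exact ⟨toENNReal_invE_ofReal_mul_le (hρ.one_le_one_div hδ) hφp' hx hK,
    toENNReal_invE_ofReal_mul_le (hρ.one_le_one_div_sq hδ) hφ' hx hK⟩

/-- Dominated variation for `φ_{u,+}` and `φ_u`: there is `C(δ) > 0`, depending only on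
`δ`, such that for every admissible model, every unit vector `u` and all `x, K ≥ 1`:
if `φ_{u,+}⁻¹(x) ≥ 1` then `φ_{u,+}⁻¹(Kx) ≤ (2K²/δ) φ_{u,+}⁻¹(x)`, and if
`φ_u⁻¹(x) ≥ 1` then `φ_u⁻¹(Kx) ≤ (K²/C(δ)) φ_u⁻¹(x)` (in `[0,+∞]`). -/
theorem stmt_8
    (δ : ℝ) (hδ : 0 < δ) :
    ∃ C : ℝ, 0 < C ∧
      ∀ (d : ℕ), 1 ≤ d →
      ∀ (p q r : ℤ → ℝ),
        (∀ n, p n + q n + r n = 1) →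
        (∀ n, δ ≤ p n ∧ δ ≤ q n ∧ δ ≤ r n) →
      ∀ (μ : ℤ → (Fin d → ℤ) → ℝ),
        (∀ n k, 0 ≤ μ n k) →
        (∀ n, HasSum (μ n) 1) →
        (∀ n, ∃ M : ℝ, M ≤ 1 / δ ∧
          HasSum (fun k : Fin d → ℤ =>
            ‖(fun i => (k i : ℝ) : Fin d → ℝ)‖ ^ (max d 3) * μ n k) M) →
      ∀ (m : ℤ → EuclideanSpace ℝ (Fin d)),
        (∀ n i, HasSum (fun k : Fin d → ℤ => (k i : ℝ) * μ n k) (m n i)) →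
      ∀ (η : ℤ → EuclideanSpace ℝ (Fin d)), (∀ n, η n = (r n / p n) • m n) →
      ∀ (a : ℤ → ℝ), (∀ n, a n = q n / p n) →
      ∀ (ρ : ℤ → ℝ), ρ 0 = 1 →
        (∀ n : ℤ, 1 ≤ n → ρ n = ρ (n - 1) * a n) →
        (∀ n : ℤ, n ≤ -1 → ρ n = ρ (n + 1) / a (n + 1)) →
      ∀ (vp vm wp wm : ℕ → ℝ),
        (∀ n : ℕ, vp n = ∑ k ∈ Finset.Icc (0 : ℤ) (n : ℤ), ρ k) →
        (∀ n : ℕ, vm n = a 0 * ∑ k ∈ Finset.Icc (-(n : ℤ) - 1) (-1 : ℤ), ρ k) →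
        (∀ n : ℕ, wp n = ∑ k ∈ Finset.Icc (0 : ℤ) (n : ℤ), 1 / ρ k) →
        (∀ n : ℕ, wm n = (1 / a 0) * ∑ k ∈ Finset.Icc (-(n : ℤ) - 1) (-1 : ℤ), 1 / ρ k) →
      ∀ (ψ : ℕ → ℝ≥0∞),
        (∀ n : ℕ, (ψ n) ^ 2 =
          (n : ℝ≥0∞) * (extF wp (invR vp (n : ℝ)) + extF wm (invR vm (n : ℝ)))) →
      ∀ (T : EuclideanSpace ℝ (Fin d) → ℤ → ℤ → ℝ),
        (∀ u k l, T u k l =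
          (∑ s ∈ Finset.Icc k l, (∑ i, (η s i) * u i) * (ρ l / ρ s)) ^ 2 *
            (ρ (k - 1) / ρ l)) →
      ∀ (φ φp : EuclideanSpace ℝ (Fin d) → ℕ → ℝ≥0∞),
        (∀ u n, (φ u n) ^ 2 = (ψ n) ^ 2 +
          ∑' z : {z : ℤ × ℤ // z.1 ≤ z.2 ∧
              (((-z.1).toNat : ℕ∞) ≤ invR vm (n : ℝ)) ∧
              ((z.2.toNat : ℕ∞) ≤ invR vp (n : ℝ))},
            ENNReal.ofReal (T u (z : ℤ × ℤ).1 (z : ℤ × ℤ).2)) →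
        (∀ u n, (φp u n) ^ 2 = (ψ n) ^ 2 +
          ∑' z : {z : ℤ × ℤ // z.1 ≤ z.2 ∧
              (((-z.1).toNat : ℕ∞) ≤ invR vm (n : ℝ)) ∧
              ((z.2.toNat : ℕ∞) ≤ invR vp (n : ℝ)) ∧ 0 < z.1 * z.2},
            ENNReal.ofReal (T u (z : ℤ × ℤ).1 (z : ℤ × ℤ).2)) →
      ∀ u : EuclideanSpace ℝ (Fin d), ‖u‖ = 1 →
      ∀ x K : ℝ, 1 ≤ x → 1 ≤ K →
        (((1 : ℕ∞) ≤ invE (φp u) (ENNReal.ofReal x)) →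
          ENat.toENNReal (invE (φp u) (ENNReal.ofReal (K * x))) ≤
            ENNReal.ofReal (2 * K ^ 2 / δ) * ENat.toENNReal (invE (φp u) (ENNReal.ofReal x))) ∧
        (((1 : ℕ∞) ≤ invE (φ u) (ENNReal.ofReal x)) →
          ENat.toENNReal (invE (φ u) (ENNReal.ofReal (K * x))) ≤
            ENNReal.ofReal (K ^ 2 / C) * ENat.toENNReal (invE (φ u) (ENNReal.ofReal x))) := by
  refine ⟨δ ^ 2 / 2, by positivity, ?_⟩
  intro d _ p q r hsum hmin _ _ _ _ _ _ η _ a ha ρ hρ0 hρp hρm vp vm wp wm hvp hvm hwp hwm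
    ψ hψ T hT φ φp hφ hφp u _ x K hx hK
  have hρ : IsEllipticPotential δ ρ := isEllipticPotential_of_recursion hδ (fun n => (hmin n).1)
    (fun n => (hmin n).2.1) (fun n => by linarith [hsum n, (hmin n).2.2]) ha hρ0 hρp hρm
  have ha0 : a 0 = (ρ (-1))⁻¹ := by
    rw [hρm (-1) le_rfl, neg_add_cancel, hρ0, one_div, inv_inv]
  obtain rfl : vp = vPlus ρ := funext hvp
  obtain rfl : vm = vMinus ρ := funext fun n => by rw [hvm, ha0, vMinus]
  obtain rfl : wp = wPlus ρ := funext hwp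
  obtain rfl : wm = wMinus ρ := funext fun n => by rw [hwm, ha0, one_div, inv_inv, wMinus]
  have hTu : T u = fluctuation ρ fun s => ∑ i, η s i * u i := funext₂ (hT u)
  rw [div_div_eq_mul_div, mul_comm (K ^ 2)]
  exact stmt_8_general hδ hρ (fun s => ∑ i, η s i * u i)
    (fun n => by rw [hφ, hψ, hTu]; rfl) (fun n => by rw [hφp, hψ, hTu]; rfl)
    (zero_lt_one.trans_le hx) hK
end

section
/- Assume $\delta\le a_n\le1/\delta$ for all $n\ge1$ and $v_+(n)\to+\infty$. For $0<t<1$ define real sequences $\beta_{-1}(t)=0$, $\beta_0(t)=1$, $\beta_n(t)=\big(b_n/(1-t^2)\big)\beta_{n-1}(t)-a_n\beta_{n-2}(t)$ for $n\ge1$, and set $R(t)=1-\sum_{n\ge1}\rho_n/\big(\beta_n(t)\beta_{n-1}(t)\big)$. Then there exist $\alpha\ge1$ and $t_0>0$ such that for all $0<t<t_0$: $\frac{1}{\alpha}\le R(t)\cdot\psi_+^{-1}(1/t)\le\alpha$, where $\psi_+(n)\ge0$ is defined by $\psi_+^2(n)=n\,w_+\circ v_+^{-1}(n)$. -/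
/-- Generalized inverse of a non-decreasing function `ℕ → ℝ` at `x`:
`sup {n | f n ≤ x}` (with `sup ∅ = 0`; under the hypotheses below the sets are bounded). -/
noncomputable def invN (f : ℕ → ℝ) (x : ℝ) : ℕ := sSup {n : ℕ | f n ≤ x}

/-!
Write `l = t² / (1 - t²)`. With the flux `q n = (β n - β (n - 1)) / ρ n` the recurrence becomes a
discrete Sturm–Liouville system in which `q (n + 1) - q n = l (1 / ρ n + 1 / ρ (n + 1)) β n`. Let
`(u, p)` be the solution of the same system starting at `(1, 0)`. The Wronskian of `(u, p)` and
`(β, q)` is `1`, so the partial sums of the series telescope to `1 - u n / β n`, the ratios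
`u n / β n` decrease to `R`, and the ratios `p n / q n` increase while staying below them; hence
`p n / q n ≤ R ≤ u n / β n`.

* Upper bound: `β ≥ v`, and a discrete Grönwall inequality gives `u ≤ exp (2 l w v)`, so
  `R ≤ exp (2 l w v) / v`.
* Lower bound: `u - R β` is nonnegative and decreasing with nonpositive flux, and it stays above
  `1 - R v`; as its flux starts at `-R`, this forces `l w (1 - R v) ≤ R`.

At an index where `l w v` is of order `1`, both bounds are of order `1 / v`, and the definition of
`ψ` says that `v` is of order `ψ⁻¹(1 / t)` there.
-/

open Finset Filter Topology

/-- The discrete Sturm–Liouville system `u (n + 1) - u n = r n * p (n + 1)`,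
`p (n + 1) - p n = κ n * u n`: `u` is the solution and `p` its flux. It is the first-order form of
the three-term recurrence defining `β`. -/
structure IsSturmLiouville (r κ u p : ℕ → ℝ) : Prop where
  sol_succ : ∀ n, u (n + 1) = u n + r n * p (n + 1)
  flux_succ : ∀ n, p (n + 1) = p n + κ n * u n

lemma exists_isSturmLiouville (r κ : ℕ → ℝ) (u₀ p₀ : ℝ) :
    ∃ u p, IsSturmLiouville r κ u p ∧ u 0 = u₀ ∧ p 0 = p₀ := by
  let s : ℕ → ℝ × ℝ := fun n ↦ Nat.rec (u₀, p₀)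
    (fun n s ↦ (s.1 + r n * (s.2 + κ n * s.1), s.2 + κ n * s.1)) n
  exact ⟨fun n ↦ (s n).1, fun n ↦ (s n).2, ⟨fun _ ↦ rfl, fun _ ↦ rfl⟩, rfl, rfl⟩

namespace IsSturmLiouville

variable {r κ u p b q : ℕ → ℝ}

lemma sub_const_mul (h : IsSturmLiouville r κ u p) (h' : IsSturmLiouville r κ b q) (c : ℝ) :
    IsSturmLiouville r κ (fun n ↦ u n - c * b n) (fun n ↦ p n - c * q n) where
  sol_succ n := by rw [h.sol_succ, h'.sol_succ]; ring
  flux_succ n := by rw [h.flux_succ, h'.flux_succ]; ring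

lemma flux_eq_add_sum (h : IsSturmLiouville r κ u p) (N : ℕ) :
    p N = p 0 + ∑ k ∈ range N, κ k * u k := by
  induction N with
  | zero => simp
  | succ N ih => rw [h.flux_succ, ih, sum_range_succ, add_assoc]

lemma flux_monotone (h : IsSturmLiouville r κ u p) (hκ : ∀ n, 0 ≤ κ n) (hu : ∀ n, 0 ≤ u n) :
    Monotone p :=
  monotone_nat_of_le_succ fun n ↦ by
    rw [h.flux_succ]; exact le_add_of_nonneg_right (mul_nonneg (hκ n) (hu n))

lemma monotone (h : IsSturmLiouville r κ u p) (hr : ∀ n, 0 ≤ r n) (hp : ∀ n, 0 ≤ p n) :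
    Monotone u :=
  monotone_nat_of_le_succ fun n ↦ by
    rw [h.sol_succ]; exact le_add_of_nonneg_right (mul_nonneg (hr n) (hp (n + 1)))

lemma antitone (h : IsSturmLiouville r κ u p) (hr : ∀ n, 0 ≤ r n) (hp : ∀ n, p n ≤ 0) :
    Antitone u :=
  antitone_nat_of_succ_le fun n ↦ by
    rw [h.sol_succ]
    exact add_le_of_nonpos_right (mul_nonpos_of_nonneg_of_nonpos (hr n) (hp (n + 1)))

lemma nonneg (h : IsSturmLiouville r κ u p) (hr : ∀ n, 0 ≤ r n) (hκ : ∀ n, 0 ≤ κ n)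
    (hu₀ : 0 ≤ u 0) (hp₀ : 0 ≤ p 0) (n : ℕ) : 0 ≤ u n ∧ 0 ≤ p n := by
  induction n with
  | zero => exact ⟨hu₀, hp₀⟩
  | succ n ih =>
    have hp : 0 ≤ p (n + 1) := by
      rw [h.flux_succ]; exact add_nonneg ih.2 (mul_nonneg (hκ n) ih.1)
    refine ⟨?_, hp⟩
    rw [h.sol_succ]; exact add_nonneg ih.1 (mul_nonneg (hr n) hp)

lemma sol_pos (h : IsSturmLiouville r κ u p) (hr : ∀ n, 0 ≤ r n) (hκ : ∀ n, 0 ≤ κ n)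
    (hu₀ : 0 < u 0) (hp₀ : 0 ≤ p 0) (n : ℕ) : 0 < u n :=
  hu₀.trans_le <| h.monotone hr (fun n ↦ (h.nonneg hr hκ hu₀.le hp₀ n).2) n.zero_le

lemma flux_pos (h : IsSturmLiouville r κ u p) (hr : ∀ n, 0 ≤ r n) (hκ : ∀ n, 0 ≤ κ n)
    (hu₀ : 0 ≤ u 0) (hp₀ : 0 < p 0) (n : ℕ) : 0 < p n :=
  hp₀.trans_le <| h.flux_monotone hκ (fun n ↦ (h.nonneg hr hκ hu₀ hp₀.le n).1) n.zero_le

lemma add_flux_zero_mul_sum_le (h : IsSturmLiouville r κ u p) (hr : ∀ n, 0 ≤ r n)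
    (hκ : ∀ n, 0 ≤ κ n) (hu : ∀ n, 0 ≤ u n) (N : ℕ) :
    u 0 + p 0 * ∑ k ∈ range N, r k ≤ u N := by
  induction N with
  | zero => simp
  | succ N ih =>
    have hp : r N * p 0 ≤ r N * p (N + 1) :=
      mul_le_mul_of_nonneg_left (h.flux_monotone hκ hu (Nat.zero_le _)) (hr N)
    rw [h.sol_succ, sum_range_succ]
    linarith

lemma mul_sum_le_neg_flux_zero (h : IsSturmLiouville r κ u p) (hr : ∀ n, 0 ≤ r n)
    (hκ : ∀ n, 0 ≤ κ n) (hp : ∀ n, p n ≤ 0) (N : ℕ) :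
    u N * ∑ k ∈ range (N + 1), κ k ≤ -p 0 := by
  have hsum : u N * ∑ k ∈ range (N + 1), κ k ≤ ∑ k ∈ range (N + 1), κ k * u k := by
    rw [mul_comm, sum_mul]
    refine sum_le_sum fun k hk ↦ mul_le_mul_of_nonneg_left ?_ (hκ k)
    exact h.antitone hr hp (Nat.lt_succ_iff.mp (mem_range.mp hk))
  have := h.flux_eq_add_sum (N + 1)
  linarith [hp (N + 1)]

lemma flux_succ_le_mul_sum (h : IsSturmLiouville r κ u p) (hr : ∀ n, 0 ≤ r n)
    (hκ : ∀ n, 0 ≤ κ n) (hu₀ : 0 ≤ u 0) (hp₀ : p 0 = 0) (n : ℕ) :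
    p (n + 1) ≤ u n * ∑ k ∈ range (n + 1), κ k := by
  have hmono : Monotone u := h.monotone hr fun n ↦ (h.nonneg hr hκ hu₀ hp₀.ge n).2
  rw [h.flux_eq_add_sum, hp₀, zero_add, mul_comm, sum_mul]
  exact sum_le_sum fun k hk ↦
    mul_le_mul_of_nonneg_left (hmono (Nat.lt_succ_iff.mp (mem_range.mp hk))) (hκ k)

lemma le_mul_exp (h : IsSturmLiouville r κ u p) (hr : ∀ n, 0 ≤ r n) (hκ : ∀ n, 0 ≤ κ n)
    (hu₀ : 0 ≤ u 0) (hp₀ : p 0 = 0) (N : ℕ) :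
    u N ≤ u 0 * Real.exp ((∑ k ∈ range N, κ k) * ∑ k ∈ range N, r k) := by
  induction N with
  | zero => simp
  | succ N ih =>
    have hrN := hr N
    set K := ∑ k ∈ range (N + 1), κ k with hK
    have hle : ∑ k ∈ range N, κ k ≤ K := by
      rw [hK, sum_range_succ]; exact le_add_of_nonneg_right (hκ N)
    calc u (N + 1) = u N + r N * p (N + 1) := h.sol_succ N
      _ ≤ u N + r N * (u N * K) := by gcongr; exact h.flux_succ_le_mul_sum hr hκ hu₀ hp₀ N
      _ = u N * (K * r N + 1) := by ring
      _ ≤ u 0 * Real.exp ((∑ k ∈ range N, κ k) * ∑ k ∈ range N, r k) * Real.exp (K * r N) := by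
        refine mul_le_mul ih (Real.add_one_le_exp _) ?_ (by positivity)
        exact add_nonneg (mul_nonneg (sum_nonneg fun k _ ↦ hκ k) hrN) zero_le_one
      _ ≤ u 0 * Real.exp (K * ∑ k ∈ range N, r k) * Real.exp (K * r N) := by
        have := sum_nonneg fun k (_ : k ∈ range N) ↦ hr k
        gcongr
      _ = u 0 * Real.exp (K * ∑ k ∈ range (N + 1), r k) := by
        rw [mul_assoc, ← Real.exp_add, sum_range_succ, mul_add]

lemma wronskian_eq (h : IsSturmLiouville r κ u p) (h' : IsSturmLiouville r κ b q) (n : ℕ) :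
    u n * q n - p n * b n = u 0 * q 0 - p 0 * b 0 := by
  induction n with
  | zero => rfl
  | succ n ih =>
    rw [h.sol_succ, h'.sol_succ, h.flux_succ, h'.flux_succ]
    linear_combination ih

lemma div_sub_div_succ (h : IsSturmLiouville r κ u p) (h' : IsSturmLiouville r κ b q)
    (hb : ∀ n, b n ≠ 0) (n : ℕ) :
    u n / b n - u (n + 1) / b (n + 1) =
      (u 0 * q 0 - p 0 * b 0) * (r n / (b (n + 1) * b n)) := by
  have hW := h.wronskian_eq h' (n + 1)
  have hsol := h.sol_succ n
  have hsol' := h'.sol_succ n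
  rw [div_sub_div _ _ (hb n) (hb (n + 1)), mul_comm (b (n + 1)), ← mul_div_assoc]
  congr 1
  linear_combination r n * hW - b (n + 1) * hsol + u (n + 1) * hsol'

lemma flux_div_succ_sub_div (h : IsSturmLiouville r κ u p) (h' : IsSturmLiouville r κ b q)
    (hq : ∀ n, q n ≠ 0) (n : ℕ) :
    p (n + 1) / q (n + 1) - p n / q n =
      (u 0 * q 0 - p 0 * b 0) * (κ n / (q (n + 1) * q n)) := by
  have hW := h.wronskian_eq h' n
  have hflux := h.flux_succ n
  have hflux' := h'.flux_succ n
  rw [div_sub_div _ _ (hq (n + 1)) (hq n), ← mul_div_assoc]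
  congr 1
  linear_combination κ n * hW + q n * hflux - p n * hflux'

end IsSturmLiouville

/-- The paper's `R`, as a functional of the weights `r n = ρ (n + 1)` and of a sequence `b`
(there `β`): the amount by which the Sleszynski–Pringsheim series falls short of `1`. -/
noncomputable def seriesDeficit (r b : ℕ → ℝ) : ℝ := 1 - ∑' n, r n / (b (n + 1) * b n)

/-- Two solutions of a Sturm–Liouville system with nonnegative coefficients: `(b, q)` starts at
`(1, 1)`, like `β` with its flux, and `(u, p)` starts at `(1, 0)`, which makes their Wronskian
`u * q - p * b` equal to `1`. -/
structure IsFundamentalPair (r κ u p b q : ℕ → ℝ) : Prop where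
  weight_nonneg : ∀ n, 0 ≤ r n
  coeff_nonneg : ∀ n, 0 ≤ κ n
  left : IsSturmLiouville r κ u p
  right : IsSturmLiouville r κ b q
  left_zero : u 0 = 1
  left_flux_zero : p 0 = 0
  right_zero : b 0 = 1
  right_flux_zero : q 0 = 1

namespace IsFundamentalPair

variable {r κ u p b q : ℕ → ℝ}

lemma left_nonneg (h : IsFundamentalPair r κ u p b q) (n : ℕ) : 0 ≤ u n :=
  (h.left.nonneg h.weight_nonneg h.coeff_nonneg (by simp [h.left_zero])
    (by simp [h.left_flux_zero]) n).1

lemma right_pos (h : IsFundamentalPair r κ u p b q) (n : ℕ) : 0 < b n :=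
  h.right.sol_pos h.weight_nonneg h.coeff_nonneg (by simp [h.right_zero])
    (by simp [h.right_flux_zero]) n

lemma right_flux_pos (h : IsFundamentalPair r κ u p b q) (n : ℕ) : 0 < q n :=
  h.right.flux_pos h.weight_nonneg h.coeff_nonneg (by simp [h.right_zero])
    (by simp [h.right_flux_zero]) n

lemma wronskian_zero (h : IsFundamentalPair r κ u p b q) : u 0 * q 0 - p 0 * b 0 = 1 := by
  rw [h.left_zero, h.left_flux_zero, h.right_flux_zero]; norm_num

lemma term_nonneg (h : IsFundamentalPair r κ u p b q) (n : ℕ) :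
    0 ≤ r n / (b (n + 1) * b n) :=
  div_nonneg (h.weight_nonneg n) (mul_pos (h.right_pos _) (h.right_pos _)).le

lemma term_eq (h : IsFundamentalPair r κ u p b q) (n : ℕ) :
    r n / (b (n + 1) * b n) = u n / b n - u (n + 1) / b (n + 1) := by
  rw [h.left.div_sub_div_succ h.right (fun n ↦ (h.right_pos n).ne'), h.wronskian_zero, one_mul]

lemma antitone_div (h : IsFundamentalPair r κ u p b q) : Antitone fun n ↦ u n / b n :=
  antitone_nat_of_succ_le fun n ↦ sub_nonneg.mp <| h.term_eq n ▸ h.term_nonneg n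

lemma monotone_flux_div (h : IsFundamentalPair r κ u p b q) : Monotone fun n ↦ p n / q n :=
  monotone_nat_of_le_succ fun n ↦ sub_nonneg.mp <| by
    rw [h.left.flux_div_succ_sub_div h.right (fun n ↦ (h.right_flux_pos n).ne'),
      h.wronskian_zero, one_mul]
    exact div_nonneg (h.coeff_nonneg n) (mul_pos (h.right_flux_pos _) (h.right_flux_pos _)).le

lemma flux_div_le_div (h : IsFundamentalPair r κ u p b q) (n : ℕ) : p n / q n ≤ u n / b n := by
  rw [div_le_div_iff₀ (h.right_flux_pos n) (h.right_pos n)]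
  linarith [h.left.wronskian_eq h.right n, h.wronskian_zero]

lemma sum_term_eq (h : IsFundamentalPair r κ u p b q) (N : ℕ) :
    ∑ n ∈ range N, r n / (b (n + 1) * b n) = 1 - u N / b N := by
  simp only [h.term_eq]
  rw [sum_range_sub' (fun n ↦ u n / b n), h.left_zero, h.right_zero, div_one]

lemma tendsto_div_seriesDeficit (h : IsFundamentalPair r κ u p b q) :
    Tendsto (fun N ↦ u N / b N) atTop (𝓝 (seriesDeficit r b)) := by
  have hsum : Summable fun n ↦ r n / (b (n + 1) * b n) := by
    refine summable_of_sum_range_le (c := 1) h.term_nonneg fun N ↦ ?_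
    rw [h.sum_term_eq]
    exact sub_le_self _ (div_nonneg (h.left_nonneg N) (h.right_pos N).le)
  simpa [seriesDeficit, h.sum_term_eq] using hsum.hasSum.tendsto_sum_nat.const_sub 1

lemma seriesDeficit_mul_le (h : IsFundamentalPair r κ u p b q) (n : ℕ) :
    seriesDeficit r b * b n ≤ u n :=
  (le_div_iff₀ (h.right_pos n)).mp <| h.antitone_div.le_of_tendsto h.tendsto_div_seriesDeficit n

lemma flux_le_seriesDeficit_mul (h : IsFundamentalPair r κ u p b q) (n : ℕ) :
    p n ≤ seriesDeficit r b * q n := by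
  refine (div_le_iff₀ (h.right_flux_pos n)).mp <| ge_of_tendsto h.tendsto_div_seriesDeficit ?_
  filter_upwards [eventually_ge_atTop n] with m hm
  exact (h.monotone_flux_div hm).trans (h.flux_div_le_div m)

lemma seriesDeficit_nonneg (h : IsFundamentalPair r κ u p b q) : 0 ≤ seriesDeficit r b :=
  ge_of_tendsto' h.tendsto_div_seriesDeficit fun n ↦ div_nonneg (h.left_nonneg n) (h.right_pos n).le

lemma seriesDeficit_mul_one_add_sum_le_exp (h : IsFundamentalPair r κ u p b q) (N : ℕ) :
    seriesDeficit r b * (1 + ∑ k ∈ range N, r k) ≤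
      Real.exp ((∑ k ∈ range N, κ k) * ∑ k ∈ range N, r k) := by
  have hb : 1 + ∑ k ∈ range N, r k ≤ b N := by
    simpa only [h.right_zero, h.right_flux_zero, one_mul] using
      h.right.add_flux_zero_mul_sum_le h.weight_nonneg h.coeff_nonneg (fun n ↦ (h.right_pos n).le) N
  calc seriesDeficit r b * (1 + ∑ k ∈ range N, r k) ≤ seriesDeficit r b * b N :=
        mul_le_mul_of_nonneg_left hb h.seriesDeficit_nonneg
    _ ≤ u N := h.seriesDeficit_mul_le N
    _ ≤ Real.exp ((∑ k ∈ range N, κ k) * ∑ k ∈ range N, r k) := by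
      simpa only [h.left_zero, one_mul] using
        h.left.le_mul_exp h.weight_nonneg h.coeff_nonneg (by simp [h.left_zero]) h.left_flux_zero N

lemma sum_le_seriesDeficit_mul (h : IsFundamentalPair r κ u p b q) (N : ℕ) :
    ∑ k ∈ range (N + 1), κ k ≤
      seriesDeficit r b * (1 + (∑ k ∈ range (N + 1), κ k) * (1 + ∑ k ∈ range N, r k)) := by
  set R := seriesDeficit r b
  set K := ∑ k ∈ range (N + 1), κ k
  have hK : 0 ≤ K := sum_nonneg fun k _ ↦ h.coeff_nonneg k
  have hf : IsSturmLiouville r κ (fun n ↦ u n - R * b n) (fun n ↦ p n - R * q n) :=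
    h.left.sub_const_mul h.right R
  have hlow : 1 - R * (1 + ∑ k ∈ range N, r k) ≤ u N - R * b N := by
    have := hf.add_flux_zero_mul_sum_le h.weight_nonneg h.coeff_nonneg
      (fun n ↦ sub_nonneg.mpr (h.seriesDeficit_mul_le n)) N
    simp only [h.left_zero, h.left_flux_zero, h.right_zero, h.right_flux_zero] at this
    linarith
  have hupp : (u N - R * b N) * K ≤ R := by
    simpa [h.left_flux_zero, h.right_flux_zero] using
      hf.mul_sum_le_neg_flux_zero h.weight_nonneg h.coeff_nonneg
        (fun n ↦ sub_nonpos.mpr (h.flux_le_seriesDeficit_mul n)) N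
  linarith [mul_le_mul_of_nonneg_right hlow hK]

lemma one_le_two_mul_seriesDeficit_mul (h : IsFundamentalPair r κ u p b q) {N : ℕ} {x : ℝ}
    (hx : 1 + ∑ k ∈ range N, r k ≤ x) (hκx : 1 ≤ (∑ k ∈ range (N + 1), κ k) * x) :
    1 ≤ 2 * (seriesDeficit r b * x) := by
  have hR := h.seriesDeficit_nonneg
  have hsum := h.sum_le_seriesDeficit_mul N
  set R := seriesDeficit r b
  set K := ∑ k ∈ range (N + 1), κ k
  have hK : 0 ≤ K := sum_nonneg fun k _ ↦ h.coeff_nonneg k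
  have hKpos : 0 < K := hK.lt_of_ne' fun h0 ↦ by norm_num [h0] at hκx
  refine le_of_mul_le_mul_left ?_ hKpos
  calc K * 1 = K := mul_one K
    _ ≤ R * (1 + K * (1 + ∑ k ∈ range N, r k)) := hsum
    _ ≤ R * (K * x + K * x) := by gcongr
    _ = K * (2 * (R * x)) := by ring

end IsFundamentalPair

section InvN

variable {f : ℕ → ℝ}

lemma bddAbove_setOf_le_of_tendsto (hf : Tendsto f atTop atTop) (x : ℝ) :
    BddAbove {n | f n ≤ x} := by
  obtain ⟨K, hK⟩ := eventually_atTop.mp (hf.eventually_gt_atTop x)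
  exact ⟨K, fun n hn ↦ le_of_not_ge fun hKn ↦ (hK n hKn).not_ge hn⟩

lemma le_invN (hf : Tendsto f atTop atTop) {n : ℕ} {x : ℝ} (hn : f n ≤ x) : n ≤ invN f x :=
  le_csSup (bddAbove_setOf_le_of_tendsto hf x) hn

lemma apply_invN_le (hf : Tendsto f atTop atTop) {x : ℝ} (h₀ : f 0 ≤ x) : f (invN f x) ≤ x :=
  Nat.sSup_mem (s := {n | f n ≤ x}) ⟨0, h₀⟩ (bddAbove_setOf_le_of_tendsto hf x)

lemma lt_apply_invN_succ (hf : Tendsto f atTop atTop) (x : ℝ) : x < f (invN f x + 1) :=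
  lt_of_not_ge fun h ↦ (le_invN hf h).not_gt (Nat.lt_succ_self _)

lemma invN_apply (hf : StrictMono f) (n : ℕ) : invN f (f n) = n := by
  simp only [invN, hf.le_iff_le]
  exact csSup_Iic

end InvN

/-- `cumSum f n = f 0 + ⋯ + f n`, with the last term included: the paper's `v₊` is `cumSum ρ`, and
its `w₊` is `cumSum fun k ↦ 1 / ρ k`. -/
noncomputable def cumSum (f : ℕ → ℝ) (n : ℕ) : ℝ := ∑ k ∈ range (n + 1), f k

/-- The paper's scale function `ψ₊ = √(n * w₊ (v₊⁻¹ n))`. -/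
noncomputable def scale (ρ : ℕ → ℝ) (n : ℕ) : ℝ :=
  √(n * cumSum (fun k ↦ 1 / ρ k) (invN (cumSum ρ) n))

/-- The coefficient of the Sturm–Liouville system with weights `n ↦ ρ (n + 1)` that is satisfied by
the solutions of `β n = (1 + l) * (1 + a n) * β (n - 1) - a n * β (n - 2)`, where
`a n = ρ n / ρ (n - 1)`. -/
noncomputable def killing (ρ : ℕ → ℝ) (l : ℝ) (n : ℕ) : ℝ := l * (1 / ρ n + 1 / ρ (n + 1))

section CumSum

variable {f : ℕ → ℝ}

lemma cumSum_zero (f : ℕ → ℝ) : cumSum f 0 = f 0 := by simp [cumSum]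

lemma cumSum_succ (f : ℕ → ℝ) (n : ℕ) : cumSum f (n + 1) = cumSum f n + f (n + 1) :=
  sum_range_succ f (n + 1)

lemma cumSum_eq_add_sum_succ (f : ℕ → ℝ) (n : ℕ) :
    cumSum f n = f 0 + ∑ k ∈ range n, f (k + 1) := by
  rw [cumSum, sum_range_succ', add_comm]

lemma cumSum_strictMono (hf : ∀ n, 0 < f n) : StrictMono (cumSum f) :=
  strictMono_nat_of_lt_succ fun n ↦ by rw [cumSum_succ]; exact lt_add_of_pos_right _ (hf _)

lemma le_cumSum (hf : ∀ n, 0 ≤ f n) {k n : ℕ} (hk : k ≤ n) : f k ≤ cumSum f n :=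
  single_le_sum (fun i _ ↦ hf i) (mem_range.mpr (Nat.lt_succ_of_le hk))

lemma cumSum_succ_le {C : ℝ} (hC : 0 ≤ C) (hf : ∀ n, 0 ≤ f n) (hfC : ∀ n, f (n + 1) ≤ C * f n)
    (n : ℕ) : cumSum f (n + 1) ≤ (1 + C) * cumSum f n :=
  calc cumSum f (n + 1) = cumSum f n + f (n + 1) := cumSum_succ f n
    _ ≤ cumSum f n + C * f n := by gcongr; exact hfC n
    _ ≤ cumSum f n + C * cumSum f n := by gcongr; exact le_cumSum hf le_rfl
    _ = (1 + C) * cumSum f n := by ring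

end CumSum

section Weights

variable {ρ : ℕ → ℝ}

lemma killing_nonneg (hρ : ∀ n, 0 < ρ n) {l : ℝ} (hl : 0 ≤ l) (n : ℕ) : 0 ≤ killing ρ l n :=
  mul_nonneg hl (add_pos (one_div_pos.mpr (hρ n)) (one_div_pos.mpr (hρ (n + 1)))).le

lemma sum_killing (ρ : ℕ → ℝ) (l : ℝ) (N : ℕ) :
    ∑ k ∈ range N, killing ρ l k =
      l * (∑ k ∈ range N, 1 / ρ k + ∑ k ∈ range N, 1 / ρ (k + 1)) := by
  simp only [killing, ← mul_sum, sum_add_distrib]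

lemma mul_cumSum_le_sum_killing (hρ : ∀ n, 0 < ρ n) {l : ℝ} (hl : 0 ≤ l) (N : ℕ) :
    l * cumSum (fun k ↦ 1 / ρ k) N ≤ ∑ k ∈ range (N + 1), killing ρ l k := by
  rw [sum_killing]
  refine mul_le_mul_of_nonneg_left (le_add_of_nonneg_right ?_) hl
  exact sum_nonneg fun k _ ↦ (one_div_pos.mpr (hρ (k + 1))).le

lemma sum_killing_le (hρ : ∀ n, 0 < ρ n) {l : ℝ} (hl : 0 ≤ l) (N : ℕ) :
    ∑ k ∈ range N, killing ρ l k ≤ 2 * l * cumSum (fun k ↦ 1 / ρ k) N := by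
  have hinit : ∑ k ∈ range N, 1 / ρ k ≤ cumSum (fun k ↦ 1 / ρ k) N := by
    rw [cumSum, sum_range_succ]; exact le_add_of_nonneg_right (one_div_pos.mpr (hρ N)).le
  have htail : ∑ k ∈ range N, 1 / ρ (k + 1) ≤ cumSum (fun k ↦ 1 / ρ k) N := by
    rw [cumSum_eq_add_sum_succ]; exact le_add_of_nonneg_left (one_div_pos.mpr (hρ 0)).le
  rw [sum_killing]
  linarith [mul_le_mul_of_nonneg_left (add_le_add hinit htail) hl]

lemma pos_of_succ_eq_mul {a : ℕ → ℝ} (hρ₀ : 0 < ρ 0) (hρ : ∀ n, ρ (n + 1) = ρ n * a (n + 1))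
    (ha : ∀ n, 0 < a (n + 1)) (n : ℕ) : 0 < ρ n := by
  induction n with
  | zero => exact hρ₀
  | succ n ih => rw [hρ]; exact mul_pos ih (ha n)

lemma isSturmLiouville_of_recurrence (hρ : ∀ n, 0 < ρ n) {a : ℕ → ℝ}
    (ha : ∀ n, ρ (n + 1) = ρ n * a (n + 1)) {l : ℝ} {β : ℤ → ℝ}
    (hβ : ∀ n : ℕ, β (n + 1) = (1 + l) * (1 + a (n + 1)) * β n - a (n + 1) * β (n - 1)) :
    IsSturmLiouville (fun n ↦ ρ (n + 1)) (killing ρ l) (fun n ↦ β n)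
      (fun n ↦ (β n - β (n - 1)) / ρ n) where
  sol_succ n := by
    have := (hρ (n + 1)).ne'
    push_cast
    rw [add_sub_cancel_right]
    field_simp
    ring
  flux_succ n := by
    have hn := (hρ n).ne'
    have hn' : a (n + 1) ≠ 0 := fun h0 ↦ (hρ (n + 1)).ne' (by rw [ha, h0, mul_zero])
    push_cast
    rw [add_sub_cancel_right, hβ, killing, ha]
    field_simp
    ring

lemma exists_isFundamentalPair_of_recurrence (hρ : ∀ n, 0 < ρ n) (hρ₀ : ρ 0 = 1) {a : ℕ → ℝ}
    (ha : ∀ n, ρ (n + 1) = ρ n * a (n + 1)) {l : ℝ} (hl : 0 ≤ l) {β : ℤ → ℝ}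
    (hβ_neg_one : β (-1) = 0) (hβ_zero : β 0 = 1)
    (hβ : ∀ n : ℕ, β (n + 1) = (1 + l) * (1 + a (n + 1)) * β n - a (n + 1) * β (n - 1)) :
    ∃ u p q, IsFundamentalPair (fun n ↦ ρ (n + 1)) (killing ρ l) u p (fun n ↦ β n) q := by
  obtain ⟨u, p, hu, hu₀, hp₀⟩ := exists_isSturmLiouville (fun n ↦ ρ (n + 1)) (killing ρ l) 1 0
  exact ⟨u, p, _, fun n ↦ (hρ (n + 1)).le, killing_nonneg hρ hl, hu,
    isSturmLiouville_of_recurrence hρ ha hβ, hu₀, hp₀, hβ_zero, by simp [hβ_neg_one, hβ_zero, hρ₀]⟩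

end Weights

section Scale

variable {ρ : ℕ → ℝ}

lemma one_le_cumSum_one_div (hρ : ∀ n, 0 < ρ n) (hρ₀ : ρ 0 = 1) (n : ℕ) :
    1 ≤ cumSum (fun k ↦ 1 / ρ k) n := by
  simpa [hρ₀] using le_cumSum (fun k ↦ (one_div_pos.mpr (hρ k)).le) (Nat.zero_le n)

lemma scale_le_one_div_iff (ρ : ℕ → ℝ) {t : ℝ} (ht : 0 < t) (n : ℕ) :
    scale ρ n ≤ 1 / t ↔ t ^ 2 * (n * cumSum (fun k ↦ 1 / ρ k) (invN (cumSum ρ) n)) ≤ 1 := by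
  rw [scale, Real.sqrt_le_left (by positivity), one_div_pow, le_div_iff₀' (by positivity)]

lemma tendsto_scale (hρ : ∀ n, 0 < ρ n) (hρ₀ : ρ 0 = 1) : Tendsto (scale ρ) atTop atTop := by
  refine tendsto_atTop_mono (fun n ↦ Real.sqrt_le_sqrt ?_)
    (Real.tendsto_sqrt_atTop.comp tendsto_natCast_atTop_atTop)
  exact le_mul_of_one_le_right n.cast_nonneg (one_le_cumSum_one_div hρ hρ₀ _)

lemma one_le_invN_scale (hρ : ∀ n, 0 < ρ n) (hρ₀ : ρ 0 = 1) {t : ℝ} (ht₀ : 0 < t) (ht₁ : t ≤ 1) :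
    1 ≤ invN (scale ρ) (1 / t) := by
  have hinv : invN (cumSum ρ) 1 = 0 := by
    simpa only [cumSum_zero, hρ₀] using invN_apply (cumSum_strictMono hρ) 0
  refine le_invN (tendsto_scale hρ hρ₀) ((scale_le_one_div_iff ρ ht₀ 1).mpr ?_)
  rw [Nat.cast_one, hinv, cumSum_zero, hρ₀, div_one, mul_one, mul_one]
  exact pow_le_one₀ ht₀.le ht₁

lemma sq_mul_invN_scale_mul_cumSum_le_one (hρ : ∀ n, 0 < ρ n) (hρ₀ : ρ 0 = 1) {t : ℝ}
    (ht : 0 < t) :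
    t ^ 2 * (invN (scale ρ) (1 / t) *
      cumSum (fun k ↦ 1 / ρ k) (invN (cumSum ρ) (invN (scale ρ) (1 / t)))) ≤ 1 :=
  (scale_le_one_div_iff ρ ht _).mp <|
    apply_invN_le (tendsto_scale hρ hρ₀) (by simp [scale, ht.le])

lemma one_lt_sq_mul_invN_scale_succ_mul_cumSum (hρ : ∀ n, 0 < ρ n) (hρ₀ : ρ 0 = 1) {t : ℝ}
    (ht : 0 < t) :
    1 < t ^ 2 * (((invN (scale ρ) (1 / t) + 1 : ℕ) : ℝ) *
      cumSum (fun k ↦ 1 / ρ k) (invN (cumSum ρ) (invN (scale ρ) (1 / t) + 1 : ℕ))) := by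
  rw [← not_le, ← scale_le_one_div_iff ρ ht, not_le]
  exact lt_apply_invN_succ (tendsto_scale hρ hρ₀) (1 / t)

end Scale

section Bounds

variable {ρ u p b q : ℕ → ℝ} {l t : ℝ}

lemma one_div_four_le_seriesDeficit_mul_invN (hρ : ∀ n, 0 < ρ n) (hρ₀ : ρ 0 = 1)
    (hv : Tendsto (cumSum ρ) atTop atTop) (ht₀ : 0 < t) (ht₁ : t ≤ 1) (hl : t ^ 2 ≤ l)
    (h : IsFundamentalPair (fun n ↦ ρ (n + 1)) (killing ρ l) u p b q) :
    1 / 4 ≤ seriesDeficit (fun n ↦ ρ (n + 1)) b * invN (scale ρ) (1 / t) := by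
  set m := invN (scale ρ) (1 / t)
  set N := invN (cumSum ρ) ((m + 1 : ℕ) : ℝ)
  have hm₁ : (1 : ℝ) ≤ m := by exact_mod_cast one_le_invN_scale hρ hρ₀ ht₀ ht₁
  have hvN : 1 + ∑ k ∈ range N, ρ (k + 1) ≤ m + 1 := by
    have : cumSum ρ N ≤ (m + 1 : ℕ) :=
      apply_invN_le hv (by rw [cumSum_zero, hρ₀]; push_cast; linarith)
    rw [cumSum_eq_add_sum_succ, hρ₀] at this
    exact_mod_cast this
  have hscale : 1 < t ^ 2 * ((m + 1) * cumSum (fun k ↦ 1 / ρ k) N) := by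
    exact_mod_cast one_lt_sq_mul_invN_scale_succ_mul_cumSum hρ hρ₀ ht₀
  have hw : 1 ≤ cumSum (fun k ↦ 1 / ρ k) N := one_le_cumSum_one_div hρ hρ₀ N
  have hkill : 1 ≤ (∑ k ∈ range (N + 1), killing ρ l k) * (m + 1) :=
    calc 1 ≤ t ^ 2 * ((m + 1) * cumSum (fun k ↦ 1 / ρ k) N) := hscale.le
      _ ≤ l * ((m + 1) * cumSum (fun k ↦ 1 / ρ k) N) := by gcongr
      _ = l * cumSum (fun k ↦ 1 / ρ k) N * (m + 1) := by ring
      _ ≤ (∑ k ∈ range (N + 1), killing ρ l k) * (m + 1) := by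
        gcongr; exact mul_cumSum_le_sum_killing hρ ((sq_nonneg t).trans hl) N
  have hR := h.one_le_two_mul_seriesDeficit_mul hvN hkill
  linarith [mul_le_mul_of_nonneg_left hm₁ h.seriesDeficit_nonneg]

lemma seriesDeficit_mul_invN_le (hρ : ∀ n, 0 < ρ n) (hρ₀ : ρ 0 = 1)
    (hv : Tendsto (cumSum ρ) atTop atTop) {C : ℝ} (hρC : ∀ n, ρ (n + 1) ≤ C * ρ n) {c : ℝ}
    (ht₀ : 0 < t) (ht₁ : t ≤ 1) (hl₀ : 0 ≤ l) (hl : l ≤ c * t ^ 2)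
    (h : IsFundamentalPair (fun n ↦ ρ (n + 1)) (killing ρ l) u p b q) :
    seriesDeficit (fun n ↦ ρ (n + 1)) b * invN (scale ρ) (1 / t) ≤ (1 + C) * Real.exp (2 * c) := by
  set m := invN (scale ρ) (1 / t)
  set N := invN (cumSum ρ) m
  set R := seriesDeficit (fun n ↦ ρ (n + 1)) b
  have hC : 0 ≤ C := (pos_of_mul_pos_left ((hρ 1).trans_le (hρC 0)) (hρ 0).le).le
  have hc : 0 ≤ c := nonneg_of_mul_nonneg_left (hl₀.trans hl) (by positivity)
  have hm₁ : (1 : ℝ) ≤ m := by exact_mod_cast one_le_invN_scale hρ hρ₀ ht₀ ht₁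
  have hvN : cumSum ρ N ≤ m := apply_invN_le hv (by rwa [cumSum_zero, hρ₀])
  have hmN : m ≤ (1 + C) * cumSum ρ N :=
    (lt_apply_invN_succ hv m).le.trans (cumSum_succ_le hC (fun n ↦ (hρ n).le) hρC N)
  have hw : 1 ≤ cumSum (fun k ↦ 1 / ρ k) N := one_le_cumSum_one_div hρ hρ₀ N
  have hscale : t ^ 2 * (m * cumSum (fun k ↦ 1 / ρ k) N) ≤ 1 :=
    sq_mul_invN_scale_mul_cumSum_le_one hρ hρ₀ ht₀
  have hV : ∑ k ∈ range N, ρ (k + 1) ≤ m := by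
    rw [cumSum_eq_add_sum_succ, hρ₀] at hvN; linarith
  have hexp : (∑ k ∈ range N, killing ρ l k) * ∑ k ∈ range N, ρ (k + 1) ≤ 2 * c :=
    calc (∑ k ∈ range N, killing ρ l k) * ∑ k ∈ range N, ρ (k + 1)
        ≤ 2 * l * cumSum (fun k ↦ 1 / ρ k) N * m :=
          mul_le_mul (sum_killing_le hρ hl₀ N) hV (sum_nonneg fun k _ ↦ (hρ (k + 1)).le)
            (by positivity)
      _ ≤ 2 * (c * t ^ 2) * cumSum (fun k ↦ 1 / ρ k) N * m := by gcongr
      _ = 2 * c * (t ^ 2 * (m * cumSum (fun k ↦ 1 / ρ k) N)) := by ring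
      _ ≤ 2 * c := mul_le_of_le_one_right (by positivity) hscale
  have hRv : R * cumSum ρ N ≤ Real.exp (2 * c) := by
    rw [cumSum_eq_add_sum_succ, hρ₀]
    exact (h.seriesDeficit_mul_one_add_sum_le_exp N).trans (Real.exp_le_exp.mpr hexp)
  calc R * m ≤ R * ((1 + C) * cumSum ρ N) := mul_le_mul_of_nonneg_left hmN h.seriesDeficit_nonneg
    _ = (1 + C) * (R * cumSum ρ N) := by ring
    _ ≤ (1 + C) * Real.exp (2 * c) := by gcongr

theorem seriesDeficit_mul_invN_mem_Icc_of_recurrence (hρ : ∀ n, 0 < ρ n) (hρ₀ : ρ 0 = 1)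
    {a : ℕ → ℝ} {C : ℝ} (ha : ∀ n, ρ (n + 1) = ρ n * a (n + 1)) (haC : ∀ n, a (n + 1) ≤ C)
    (hv : Tendsto (cumSum ρ) atTop atTop) (ht₀ : 0 < t) (ht : t ≤ 1 / 2) {β : ℤ → ℝ}
    (hβ_neg_one : β (-1) = 0) (hβ_zero : β 0 = 1)
    (hβ : ∀ n : ℕ, β (n + 1) = (1 + a (n + 1)) / (1 - t ^ 2) * β n - a (n + 1) * β (n - 1)) :
    seriesDeficit (fun n ↦ ρ (n + 1)) (fun n ↦ β n) * invN (scale ρ) (1 / t) ∈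
      Set.Icc (1 / 4) ((1 + C) * Real.exp (2 * (4 / 3))) := by
  have ht₁ : t ≤ 1 := by linarith
  have hsq : t ^ 2 ≤ 1 / 4 := by nlinarith
  have hden : 0 < 1 - t ^ 2 := by linarith
  have hl_ge : t ^ 2 ≤ t ^ 2 / (1 - t ^ 2) := le_div_self (sq_nonneg t) hden (by simp [sq_nonneg])
  have hl_le : t ^ 2 / (1 - t ^ 2) ≤ 4 / 3 * t ^ 2 := by
    rw [div_le_iff₀ hden]; nlinarith [sq_nonneg t]
  have hρC (n : ℕ) : ρ (n + 1) ≤ C * ρ n := by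
    rw [ha, mul_comm]; exact mul_le_mul_of_nonneg_right (haC n) (hρ n).le
  have hl₀ : 0 ≤ t ^ 2 / (1 - t ^ 2) := (sq_nonneg t).trans hl_ge
  obtain ⟨u, p, q, h⟩ := exists_isFundamentalPair_of_recurrence hρ hρ₀ ha hl₀ hβ_neg_one hβ_zero
    fun n ↦ by rw [hβ]; field_simp; ring
  exact ⟨one_div_four_le_seriesDeficit_mul_invN hρ hρ₀ hv ht₀ ht₁ hl_ge h,
    seriesDeficit_mul_invN_le hρ hρ₀ hv hρC ht₀ ht₁ hl₀ hl_le h⟩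

end Bounds

theorem stmt_11_general
    (C : ℝ) (a : ℕ → ℝ) (ha : ∀ n : ℕ, 1 ≤ n → 0 < a n ∧ a n ≤ C)
    (ρ : ℕ → ℝ) (hρ0 : ρ 0 = 1)
    (hρ : ∀ n : ℕ, 1 ≤ n → ρ n = ρ (n - 1) * a n)
    (v w : ℕ → ℝ)
    (hv : ∀ n, v n = ∑ k ∈ Finset.range (n + 1), ρ k)
    (hw : ∀ n, w n = ∑ k ∈ Finset.range (n + 1), 1 / ρ k)
    (hvlim : Filter.Tendsto v Filter.atTop Filter.atTop)
    (ψ : ℕ → ℝ)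
    (hψ0 : ∀ n, 0 ≤ ψ n) (hψ : ∀ n : ℕ, (ψ n) ^ 2 = n * w (invN v n))
    (β : ℝ → ℤ → ℝ)
    (hβm : ∀ t, β t (-1) = 0) (hβ0 : ∀ t, β t 0 = 1)
    (hβ : ∀ t : ℝ, 0 < t → t < 1 → ∀ n : ℕ, 1 ≤ n →
      β t (n : ℤ) = ((1 + a n) / (1 - t ^ 2)) * β t ((n : ℤ) - 1) - a n * β t ((n : ℤ) - 2))
    (R : ℝ → ℝ)
    (hR : ∀ t : ℝ, 0 < t → t < 1 →
      R t = 1 - ∑' n : ℕ, ρ (n + 1) / (β t ((n : ℤ) + 1) * β t (n : ℤ))) :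
    ∃ α : ℝ, 1 ≤ α ∧ ∃ t₀ : ℝ, 0 < t₀ ∧ t₀ ≤ 1 ∧ ∀ t : ℝ, 0 < t → t < t₀ →
      1 / α ≤ R t * (invN ψ (1 / t) : ℝ) ∧ R t * (invN ψ (1 / t) : ℝ) ≤ α := by
  have ha_pos (n : ℕ) : 0 < a (n + 1) := (ha _ n.succ_pos).1
  have hρ_succ (n : ℕ) : ρ (n + 1) = ρ n * a (n + 1) := hρ (n + 1) n.succ_pos
  have hρ_pos : ∀ n, 0 < ρ n := pos_of_succ_eq_mul (by simp [hρ0]) hρ_succ ha_pos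
  obtain rfl : v = cumSum ρ := funext hv
  obtain rfl : w = cumSum fun k ↦ 1 / ρ k := funext hw
  obtain rfl : ψ = scale ρ := funext fun n ↦ by rw [scale, ← hψ, Real.sqrt_sq (hψ0 n)]
  refine ⟨max 4 ((1 + C) * Real.exp (2 * (4 / 3))), le_max_of_le_left (by norm_num), 1 / 2,
    by norm_num, by norm_num, fun t ht₀ ht ↦ ?_⟩
  have ht₁ : t < 1 := by linarith
  have hβ_succ (n : ℕ) : β t (n + 1) =
      (1 + a (n + 1)) / (1 - t ^ 2) * β t n - a (n + 1) * β t (n - 1) := by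
    convert hβ t ht₀ ht₁ (n + 1) n.succ_pos using 4 <;> push_cast <;> ring
  have hR_eq : R t = seriesDeficit (fun n ↦ ρ (n + 1)) (fun n ↦ β t n) := by
    simp only [hR t ht₀ ht₁, seriesDeficit, Nat.cast_add, Nat.cast_one]
  obtain ⟨hlower, hupper⟩ := seriesDeficit_mul_invN_mem_Icc_of_recurrence hρ_pos hρ0 hρ_succ
    (fun n ↦ (ha _ n.succ_pos).2) hvlim ht₀ ht.le (hβm t) (hβ0 t) hβ_succ
  rw [hR_eq]
  exact ⟨(one_div_le_one_div_of_le (by norm_num) (le_max_left _ _)).trans hlower,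
    hupper.trans (le_max_right _ _)⟩

/-- The quantity `R(t) = 1 - ∑_{n≥1} ρ n / (β n(t) β (n-1)(t))`
(probabilistically `1 - 𝔼⁺((1-t²)^{σ-1})`) has exact order `1 / ψ₊⁻¹(1/t)` as `t → 0⁺`. -/
theorem stmt_11
    (δ : ℝ) (hδ0 : 0 < δ) (hδ1 : δ < 1)
    (a : ℕ → ℝ) (ha : ∀ n : ℕ, 1 ≤ n → δ ≤ a n ∧ a n ≤ 1 / δ)
    (ρ : ℕ → ℝ) (hρ0 : ρ 0 = 1)
    (hρ : ∀ n : ℕ, 1 ≤ n → ρ n = ρ (n - 1) * a n)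
    (v w : ℕ → ℝ)
    (hv : ∀ n, v n = ∑ k ∈ Finset.range (n + 1), ρ k)
    (hw : ∀ n, w n = ∑ k ∈ Finset.range (n + 1), 1 / ρ k)
    (hvlim : Filter.Tendsto v Filter.atTop Filter.atTop)
    (ψ : ℕ → ℝ)
    (hψ0 : ∀ n, 0 ≤ ψ n) (hψ : ∀ n : ℕ, (ψ n) ^ 2 = n * w (invN v n))
    (β : ℝ → ℤ → ℝ)
    (hβm : ∀ t, β t (-1) = 0) (hβ0 : ∀ t, β t 0 = 1)
    (hβ : ∀ t : ℝ, 0 < t → t < 1 → ∀ n : ℕ, 1 ≤ n →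
      β t (n : ℤ) = ((1 + a n) / (1 - t ^ 2)) * β t ((n : ℤ) - 1) - a n * β t ((n : ℤ) - 2))
    (R : ℝ → ℝ)
    (hR : ∀ t : ℝ, 0 < t → t < 1 →
      R t = 1 - ∑' n : ℕ, ρ (n + 1) / (β t ((n : ℤ) + 1) * β t (n : ℤ))) :
    ∃ α : ℝ, 1 ≤ α ∧ ∃ t₀ : ℝ, 0 < t₀ ∧ t₀ ≤ 1 ∧ ∀ t : ℝ, 0 < t → t < t₀ →
      1 / α ≤ R t * (invN ψ (1 / t) : ℝ) ∧ R t * (invN ψ (1 / t) : ℝ) ≤ α := by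
  exact stmt_11_general (1 / δ) a (fun n hn ↦ ⟨hδ0.trans_le (ha n hn).1, (ha n hn).2⟩) ρ hρ0 hρ
    v w hv hw hvlim ψ hψ0 hψ β hβm hβ0 hβ R hR
end
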